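/- arXiv:1309.2459 — 2 statements merged into one kernel-verified Lean document; each statement's English description precedes it below -/
import Mathlib

section
/- Let Ω ⊆ ℝ² be open and let f : Ω → ℝ be a C^∞ function satisfying the zero mean curvature equation (1 − f_y²) f_xx + 2 f_x f_y f_xy + (1 − f_x²) f_yy = 0 on Ω. If p ∈ Ω is a non-degenerate point of type change, i.e. B(p) = 0 and ∇B(p) ≠ 0 where B := 1 − f_x² − f_y², then f is real analytic on some neighborhood of p. -/
/-!
The proof linearizes the equation by a hodograph transformation and solves the resulting linear
equation explicitly.

At the point `p` one has `f_x² + f_y² = 1`, so after replacing `f` by `-f` if necessary `f_x ≠ -1`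
near `p`. Use `s = B / (1 + f_x)²` and `τ = f_y / (1 + f_x)` as new coordinates (`hodo`). The zero
mean curvature equation at `p` says that the Hessian `H` of `f` satisfies `⟨Hn, n⟩ = 0` for
`n = ∇f`, and `Hn = -∇B / 2 ≠ 0`, so `H` is invertible and `(s, τ)` are indeed coordinates near `p`
(`hessian_injective`, `hodo_fderiv_injective`).

Let `(X, Y)` be the inverse coordinate change, `T = f (X, Y)`, `Z = T + X` and `V = T - X`.
Symmetry of `H` and the zero mean curvature equation become a linear first order system
(`FirstOrder`) expressing the derivatives of `Y` and `V` through those of `Z`. Its compatibility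
condition is `4 s Z_ss + 2 Z_s + Z_ττ = 0`, and `Y` and `V` solve the same equation
(`keldysh_of_firstOrder`).

Every `C²` solution `u` of `4 s u_ss + 2 u_s + u_ττ = 0` near a point `(0, τ₀)` is analytic there
(`analyticAt_of_keldysh`). For `s = w² ≥ 0` the function `u (w², τ)` is harmonic in `τ + i w` and
even in `w`, so it is given by a power series in `τ + i w` with real coefficients. Substituting in
this series a real matrix, affine in `(s, τ)`, for `τ + i √s` yields an analytic function `g` of
`(s, τ)` which equals `u` for `s ≥ 0` (`exists_analytic_of_nonneg`). By the identity theorem `g`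
solves the equation also for `s < 0`. There `u - g`, as a function of `w = √(-s)` and `τ`, solves
the wave equation with vanishing Cauchy data on `w = 0`, so it vanishes
(`eq_zero_of_keldysh_neg`).

Hence `X`, `Y`, `T` are analytic functions of `(s, τ)`. The coordinate change is analytic as the
inverse of an analytic map with invertible derivative, and `f` is the composition of `T` with it.
-/

open Set

/-- Partial derivative in the first (x) direction. -/
noncomputable def pd1 {E : Type*} [NormedAddCommGroup E] [NormedSpace ℝ E]
    (f : ℝ × ℝ → E) (q : ℝ × ℝ) : E := fderiv ℝ f q (1, 0)

/-- Partial derivative in the second (y) direction. -/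
noncomputable def pd2 {E : Type*} [NormedAddCommGroup E] [NormedSpace ℝ E]
    (f : ℝ × ℝ → E) (q : ℝ × ℝ) : E := fderiv ℝ f q (0, 1)

/-- B = 1 - f_x^2 - f_y^2. -/
noncomputable def Bfun (f : ℝ × ℝ → ℝ) (q : ℝ × ℝ) : ℝ :=
  1 - (pd1 f q) ^ 2 - (pd2 f q) ^ 2

/-- The zero mean curvature equation at a point. -/
def ZMCAt (f : ℝ × ℝ → ℝ) (q : ℝ × ℝ) : Prop :=
  (1 - (pd2 f q) ^ 2) * pd1 (pd1 f) q
    + 2 * pd1 f q * pd2 f q * pd2 (pd1 f) q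
    + (1 - (pd1 f q) ^ 2) * pd2 (pd2 f) q = 0

open Filter Topology

/-! ### Partial derivatives -/

lemma fderiv_apply_eq_pd (u : ℝ × ℝ → ℝ) (q v : ℝ × ℝ) :
    fderiv ℝ u q v = pd1 u q * v.1 + pd2 u q * v.2 := by
  have hv : v = v.1 • ((1 : ℝ), (0 : ℝ)) + v.2 • ((0 : ℝ), (1 : ℝ)) := by
    ext <;> simp
  conv_lhs => rw [hv]
  rw [map_add, map_smul, map_smul, pd1, pd2, smul_eq_mul, smul_eq_mul]
  ring

lemma pd_symm {u : ℝ × ℝ → ℝ} {q : ℝ × ℝ} (h : ContDiffAt ℝ 2 u q) :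
    pd1 (pd2 u) q = pd2 (pd1 u) q := by
  have hd : DifferentiableAt ℝ (fderiv ℝ u) q :=
    (h.fderiv_right (m := 1) (by norm_num)).differentiableAt (by norm_num)
  have key : ∀ v w : ℝ × ℝ, fderiv ℝ (fun x => fderiv ℝ u x v) q w
      = fderiv ℝ (fderiv ℝ u) q w v := by
    intro v w
    rw [fderiv_clm_apply hd (by fun_prop)]
    simp
  have hs := h.isSymmSndFDerivAt (by simp)
  calc pd1 (pd2 u) q = fderiv ℝ (fderiv ℝ u) q (1, 0) (0, 1) := key _ _
    _ = fderiv ℝ (fderiv ℝ u) q (0, 1) (1, 0) := hs _ _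
    _ = pd2 (pd1 u) q := (key _ _).symm

lemma ContDiffAt.pd1_of {n m : WithTop ℕ∞} {u : ℝ × ℝ → ℝ} {q : ℝ × ℝ}
    (h : ContDiffAt ℝ n u q) (hmn : m + 1 ≤ n) : ContDiffAt ℝ m (pd1 u) q :=
  (h.fderiv_right hmn).clm_apply contDiffAt_const

lemma ContDiffAt.pd2_of {n m : WithTop ℕ∞} {u : ℝ × ℝ → ℝ} {q : ℝ × ℝ}
    (h : ContDiffAt ℝ n u q) (hmn : m + 1 ≤ n) : ContDiffAt ℝ m (pd2 u) q :=
  (h.fderiv_right hmn).clm_apply contDiffAt_const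

lemma ContDiffAt.diff2 {u : ℝ × ℝ → ℝ} {q : ℝ × ℝ}
    (h : ContDiffAt ℝ 2 u q) : DifferentiableAt ℝ u q := h.differentiableAt (by norm_num)

lemma ContDiffAt.pd1_diff {u : ℝ × ℝ → ℝ} {q : ℝ × ℝ}
    (h : ContDiffAt ℝ 2 u q) : DifferentiableAt ℝ (pd1 u) q :=
  (h.pd1_of (m := 1) (by norm_num)).differentiableAt (by norm_num)

lemma ContDiffAt.pd2_diff {u : ℝ × ℝ → ℝ} {q : ℝ × ℝ}
    (h : ContDiffAt ℝ 2 u q) : DifferentiableAt ℝ (pd2 u) q :=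
  (h.pd2_of (m := 1) (by norm_num)).differentiableAt (by norm_num)

/-- Chain rule along a curve, in terms of the two partial derivatives. -/
lemma hasDerivAt_comp_curve {u : ℝ × ℝ → ℝ} {α β : ℝ → ℝ} {α' β' t : ℝ}
    (hu : DifferentiableAt ℝ u (α t, β t)) (hα : HasDerivAt α α' t) (hβ : HasDerivAt β β' t) :
    HasDerivAt (fun r => u (α r, β r))
      (pd1 u (α t, β t) * α' + pd2 u (α t, β t) * β') t := by
  have h := hu.hasFDerivAt.comp_hasDerivAt t (hα.prodMk hβ)
  rwa [fderiv_apply_eq_pd] at h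

lemma pd1_eq_of_hasDerivAt {u : ℝ × ℝ → ℝ} {q : ℝ × ℝ} {d : ℝ} (hu : DifferentiableAt ℝ u q)
    (h : HasDerivAt (fun r => u (r, q.2)) d q.1) : pd1 u q = d := by
  have := hasDerivAt_comp_curve (u := u) (t := q.1) (α := fun r => r) (β := fun _ => q.2)
    hu (hasDerivAt_id q.1) (hasDerivAt_const _ _)
  have := this.unique h
  simpa using this

lemma pd2_eq_of_hasDerivAt {u : ℝ × ℝ → ℝ} {q : ℝ × ℝ} {d : ℝ} (hu : DifferentiableAt ℝ u q)
    (h : HasDerivAt (fun r => u (q.1, r)) d q.2) : pd2 u q = d := by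
  have := hasDerivAt_comp_curve (u := u) (t := q.2) (α := fun _ => q.1) (β := fun r => r)
    hu (hasDerivAt_const _ _) (hasDerivAt_id q.2)
  have := this.unique h
  simpa using this

lemma hasDerivAt_fst {u : ℝ × ℝ → ℝ} {q : ℝ × ℝ} (hu : DifferentiableAt ℝ u q) :
    HasDerivAt (fun r => u (r, q.2)) (pd1 u q) q.1 := by
  have := hasDerivAt_comp_curve (u := u) (t := q.1) (α := fun r => r) (β := fun _ => q.2)
    hu (hasDerivAt_id q.1) (hasDerivAt_const _ _)
  simpa using this

lemma hasDerivAt_snd {u : ℝ × ℝ → ℝ} {q : ℝ × ℝ} (hu : DifferentiableAt ℝ u q) :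
    HasDerivAt (fun r => u (q.1, r)) (pd2 u q) q.2 := by
  have := hasDerivAt_comp_curve (u := u) (t := q.2) (α := fun _ => q.1) (β := fun r => r)
    hu (hasDerivAt_const _ _) (hasDerivAt_id q.2)
  simpa using this

lemma pd1_congr {u v : ℝ × ℝ → ℝ} {q : ℝ × ℝ} (h : u =ᶠ[𝓝 q] v) : pd1 u q = pd1 v q := by
  rw [pd1, pd1, h.fderiv_eq]

lemma pd2_congr {u v : ℝ × ℝ → ℝ} {q : ℝ × ℝ} (h : u =ᶠ[𝓝 q] v) : pd2 u q = pd2 v q := by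
  rw [pd2, pd2, h.fderiv_eq]

lemma pd1_eventuallyEq {u v : ℝ × ℝ → ℝ} {q : ℝ × ℝ} (h : u =ᶠ[𝓝 q] v) :
    pd1 u =ᶠ[𝓝 q] pd1 v :=
  h.eventuallyEq_nhds.mono fun _ hx => pd1_congr hx

lemma pd2_eventuallyEq {u v : ℝ × ℝ → ℝ} {q : ℝ × ℝ} (h : u =ᶠ[𝓝 q] v) :
    pd2 u =ᶠ[𝓝 q] pd2 v :=
  h.eventuallyEq_nhds.mono fun _ hx => pd2_congr hx

lemma AnalyticAt.pd1_of {u : ℝ × ℝ → ℝ} {q : ℝ × ℝ} (h : AnalyticAt ℝ u q) :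
    AnalyticAt ℝ (pd1 u) q :=
  ((ContinuousLinearMap.apply ℝ ℝ ((1 : ℝ), (0 : ℝ))).analyticAt _).comp h.fderiv

lemma AnalyticAt.pd2_of {u : ℝ × ℝ → ℝ} {q : ℝ × ℝ} (h : AnalyticAt ℝ u q) :
    AnalyticAt ℝ (pd2 u) q :=
  ((ContinuousLinearMap.apply ℝ ℝ ((0 : ℝ), (1 : ℝ))).analyticAt _).comp h.fderiv

/-! ### The degenerate operator -/

/-- The operator `4 s ∂_s² + 2 ∂_s + ∂_τ²`. Under `s = w²` it becomes the Laplacian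
`∂_w² + ∂_τ²`, under `s = -w²` the negative `∂_τ² - ∂_w²` of the wave operator. -/
noncomputable def keldysh (u : ℝ × ℝ → ℝ) (q : ℝ × ℝ) : ℝ :=
  4 * q.1 * pd1 (pd1 u) q + 2 * pd1 u q + pd2 (pd2 u) q

lemma keldysh_congr {u v : ℝ × ℝ → ℝ} {q : ℝ × ℝ} (h : u =ᶠ[𝓝 q] v) :
    keldysh u q = keldysh v q := by
  rw [keldysh, keldysh, pd1_congr h, pd1_congr (pd1_eventuallyEq h),
    pd2_congr (pd2_eventuallyEq h)]

lemma keldysh_sub {u v : ℝ × ℝ → ℝ} {q : ℝ × ℝ} (hu : ContDiffAt ℝ 2 u q)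
    (hv : ContDiffAt ℝ 2 v q) : keldysh (u - v) q = keldysh u q - keldysh v q := by
  have hu' : ∀ᶠ x in 𝓝 q, ContDiffAt ℝ 2 u x := hu.eventually (by simp)
  have hv' : ∀ᶠ x in 𝓝 q, ContDiffAt ℝ 2 v x := hv.eventually (by simp)
  have h1 : pd1 (u - v) =ᶠ[𝓝 q] pd1 u - pd1 v := by
    filter_upwards [hu', hv'] with x hx hy
    rw [Pi.sub_apply, pd1, fderiv_sub hx.diff2 hy.diff2]; rfl
  have h2 : pd2 (u - v) =ᶠ[𝓝 q] pd2 u - pd2 v := by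
    filter_upwards [hu', hv'] with x hx hy
    rw [Pi.sub_apply, pd2, fderiv_sub hx.diff2 hy.diff2]; rfl
  have h11 : pd1 (pd1 (u - v)) q = pd1 (pd1 u) q - pd1 (pd1 v) q := by
    rw [pd1_congr h1, pd1, fderiv_sub hu.pd1_diff hv.pd1_diff]; rfl
  have h22 : pd2 (pd2 (u - v)) q = pd2 (pd2 u) q - pd2 (pd2 v) q := by
    rw [pd2_congr h2, pd2, fderiv_sub hu.pd2_diff hv.pd2_diff]; rfl
  rw [keldysh, keldysh, keldysh, h11, h22, h1.eq_of_nhds, Pi.sub_apply]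
  ring

/-! ### The hyperbolic side -/

/-- Uniqueness for the wave equation: a solution of `keldysh v = 0` which vanishes on `s = 0`
vanishes for `s < 0` as well. With `D (w, τ) = v (-w², τ)` one has `D_ww = D_ττ`, `D = D_w = 0`
on `w = 0`, and `D_w ± D_τ` is constant along the characteristics `τ ± w = c`. -/
lemma eq_zero_of_keldysh_neg {v : ℝ × ℝ → ℝ} {τ₀ ε : ℝ}
    (hv : ∀ s τ, |s| < ε ^ 2 → |τ - τ₀| < 2 * ε → ContDiffAt ℝ 2 v (s, τ))
    (hK : ∀ s τ, |s| < ε ^ 2 → |τ - τ₀| < 2 * ε → keldysh v (s, τ) = 0)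
    (h0 : ∀ τ, |τ - τ₀| < 2 * ε → v (0, τ) = 0)
    {w τ : ℝ} (hw : 0 ≤ w) (hwε : w < ε) (hτ : |τ - τ₀| < ε) : v (-w ^ 2, τ) = 0 := by
  have hε : 0 < ε := lt_of_le_of_lt hw hwε
  have hsq : ∀ t, 0 ≤ t → t < ε → |-t ^ 2| < ε ^ 2 := by
    intro t h1 h2
    rw [abs_neg, abs_of_nonneg (by positivity)]
    exact pow_lt_pow_left₀ h2 h1 two_ne_zero
  -- the tangential derivative vanishes on `s = 0`
  have h02 : ∀ τ, |τ - τ₀| < 2 * ε → pd2 v (0, τ) = 0 := by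
    intro τ hτ
    refine pd2_eq_of_hasDerivAt (hv 0 τ (by simpa using by positivity) hτ).diff2 ?_
    refine (hasDerivAt_const τ (0 : ℝ)).congr_of_eventuallyEq ?_
    have : ∀ᶠ r in 𝓝 τ, |r - τ₀| < 2 * ε :=
      (continuous_abs.comp (continuous_id.sub continuous_const)).continuousAt.eventually_lt
        continuousAt_const hτ
    exact this.mono fun r hr => h0 r hr
  have hpow : ∀ t : ℝ, HasDerivAt (fun r : ℝ => -r ^ 2) (-(2 * t)) t := by
    intro t
    have := ((hasDerivAt_id t).fun_pow 2).fun_neg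
    simpa using this
  -- the two characteristic derivatives, for `σ = 1` and `σ = -1`
  have char : ∀ σ : ℝ, σ ^ 2 = 1 → ∀ w τ, 0 ≤ w → w < ε → |τ - τ₀| < ε →
      -(2 * w) * pd1 v (-w ^ 2, τ) + σ * pd2 v (-w ^ 2, τ) = 0 := by
    intro σ hσ w τ hw hwε hτ
    have hσ1 : |σ| = 1 := by
      rw [← sq_abs] at hσ
      nlinarith [abs_nonneg σ]
    set c := τ + σ * w with hc
    set P : ℝ → ℝ := fun t => -(2 * t) * pd1 v (-t ^ 2, c - σ * t)
      + σ * pd2 v (-t ^ 2, c - σ * t) with hP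
    have hdom : ∀ t ∈ Icc 0 w, |-t ^ 2| < ε ^ 2 ∧ |c - σ * t - τ₀| < 2 * ε := by
      intro t ht
      refine ⟨hsq t ht.1 (lt_of_le_of_lt ht.2 hwε), ?_⟩
      have : c - σ * t - τ₀ = (τ - τ₀) + σ * (w - t) := by rw [hc]; ring
      rw [this]
      calc |(τ - τ₀) + σ * (w - t)| ≤ |τ - τ₀| + |σ * (w - t)| := abs_add_le _ _
        _ = |τ - τ₀| + (w - t) := by
            rw [abs_mul, hσ1, one_mul, abs_of_nonneg (sub_nonneg.2 ht.2)]
        _ < 2 * ε := by linarith [ht.1]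
    have hder : ∀ t ∈ Icc 0 w, HasDerivAt P 0 t := by
      intro t ht
      obtain ⟨h1, h2⟩ := hdom t ht
      have hC := hv _ _ h1 h2
      have hβ : HasDerivAt (fun r => c - σ * r) (-σ) t := by
        simpa using ((hasDerivAt_id t).const_mul σ).const_sub c
      have e1 := hasDerivAt_comp_curve (t := t) hC.pd1_diff (hpow t) hβ
      have e2 := hasDerivAt_comp_curve (t := t) hC.pd2_diff (hpow t) hβ
      have h2t : HasDerivAt (fun r : ℝ => -(2 * r)) (-2) t := by
        simpa using ((hasDerivAt_id t).const_mul (2 : ℝ)).fun_neg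
      refine ((h2t.mul e1).add (e2.const_mul σ)).congr_deriv ?_
      have hk := hK _ _ h1 h2
      have hs := pd_symm hC
      rw [keldysh] at hk
      simp only at hk
      rw [hs]
      linear_combination (-1 : ℝ) * hk
        - pd2 (pd2 v) (-t ^ 2, c - σ * t) * hσ
    have hconst : P w = P 0 := by
      refine constant_of_has_deriv_right_zero (fun t ht => (hder t ht).continuousAt.continuousWithinAt)
        (fun t ht => (hder t ⟨ht.1, ht.2.le⟩).hasDerivWithinAt) w ⟨hw, le_rfl⟩
    have hP0 : P 0 = 0 := by
      have := (hdom 0 ⟨le_rfl, hw⟩).2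
      simp only [mul_zero, sub_zero] at this
      simp [hP, h02 c this]
    have : P w = -(2 * w) * pd1 v (-w ^ 2, τ) + σ * pd2 v (-w ^ 2, τ) := by
      simp [hP, hc]
    rw [← this, hconst, hP0]
  have hD : ∀ t ∈ Icc 0 w, HasDerivAt (fun r => v (-r ^ 2, τ)) 0 t := by
    intro t ht
    have ht' := lt_of_le_of_lt ht.2 hwε
    have hC := hv _ τ (hsq t ht.1 ht') (by linarith)
    have e := hasDerivAt_comp_curve (t := t) hC.diff2 (hpow t) (hasDerivAt_const t τ)
    refine e.congr_deriv ?_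
    have h1 := char 1 (by norm_num) t τ ht.1 ht' hτ
    have h2 := char (-1) (by norm_num) t τ ht.1 ht' hτ
    linear_combination (h1 + h2) / 2
  have := constant_of_has_deriv_right_zero
    (fun t ht => (hD t ht).continuousAt.continuousWithinAt)
    (fun t ht => (hD t ⟨ht.1, ht.2.le⟩).hasDerivWithinAt) w ⟨hw, le_rfl⟩
  rw [this]
  simpa using h0 τ (by linarith)

/-! ### The elliptic side -/

open Complex InnerProductSpace in
lemma hasFDerivAt_comp_sq {G : ℝ × ℝ → ℝ} {z : ℂ} (hG : DifferentiableAt ℝ G (z.im ^ 2, z.re)) :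
    HasFDerivAt (fun y : ℂ => G (y.im ^ 2, y.re))
      ((pd1 G (z.im ^ 2, z.re) * (2 * z.im)) • imCLM + pd2 G (z.im ^ 2, z.re) • reCLM) z := by
  have h1 : HasFDerivAt (fun y : ℂ => y.im) imCLM z := imCLM.hasFDerivAt
  have h2 : HasFDerivAt (fun y : ℂ => y.re) reCLM z := reCLM.hasFDerivAt
  have h3 : HasFDerivAt (fun y : ℂ => (y.im ^ 2, y.re)) _ z := (h1.pow 2).prodMk h2
  refine (hG.hasFDerivAt.comp z h3).congr_fderiv ?_
  ext v
  simp [fderiv_apply_eq_pd]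
  ring

open Complex InnerProductSpace in
lemma harmonicAt_comp_sq {u : ℝ × ℝ → ℝ} {τ₀ : ℝ}
    (hu : ∀ᶠ q in 𝓝 ((0 : ℝ), τ₀), ContDiffAt ℝ 2 u q ∧ keldysh u q = 0) :
    HarmonicAt (fun z : ℂ => u (z.im ^ 2, z.re)) (τ₀ : ℂ) := by
  have hφ : ContDiff ℝ 2 (fun z : ℂ => (z.im ^ 2, z.re)) :=
    (imCLM.contDiff.pow 2).prodMk reCLM.contDiff
  have ht : Tendsto (fun z : ℂ => (z.im ^ 2, z.re)) (𝓝 (τ₀ : ℂ)) (𝓝 ((0 : ℝ), τ₀)) := by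
    have := hφ.continuous.tendsto (τ₀ : ℂ)
    simpa using this
  have hu' := ht.eventually hu
  refine ⟨?_, ?_⟩
  · have h := hu'.self_of_nhds.1
    exact ContDiffAt.comp (τ₀ : ℂ) (g := u) h hφ.contDiffAt
  · filter_upwards [hu'.eventually_nhds] with z hz
    set U : ℂ → ℝ := fun z : ℂ => u (z.im ^ 2, z.re) with hU
    obtain ⟨hC, hK⟩ := hz.self_of_nhds
    have hUC : ContDiffAt ℝ 2 U z := ContDiffAt.comp z (g := u) hC hφ.contDiffAt
    have hd : DifferentiableAt ℝ (fderiv ℝ U) z :=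
      (hUC.fderiv_right (m := 1) (by norm_num)).differentiableAt (by norm_num)
    have key : ∀ v : ℂ, fderiv ℝ (fderiv ℝ U) z v v = fderiv ℝ (fun x => fderiv ℝ U x v) z v := by
      intro v
      rw [fderiv_clm_apply hd (by fun_prop)]
      simp
    have e1 : (fun x => fderiv ℝ U x 1) =ᶠ[𝓝 z] fun y => pd2 u (y.im ^ 2, y.re) := by
      filter_upwards [hz] with y hy
      rw [(hasFDerivAt_comp_sq hy.1.diff2).fderiv]
      simp
    have e2 : (fun x => fderiv ℝ U x I) =ᶠ[𝓝 z]
        fun y => (2 * y.im) * pd1 u (y.im ^ 2, y.re) := by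
      filter_upwards [hz] with y hy
      rw [(hasFDerivAt_comp_sq hy.1.diff2).fderiv]
      simp [mul_comm]
    have h2im : HasFDerivAt (fun y : ℂ => 2 * y.im) ((2 : ℝ) • imCLM) z :=
      (imCLM.hasFDerivAt (x := z)).const_mul 2
    rw [laplacian_eq_iteratedFDeriv_complexPlane]
    simp only [iteratedFDeriv_two_apply, Fin.isValue, Matrix.cons_val_zero, Matrix.cons_val_one,
      Matrix.cons_val_fin_one, Pi.zero_apply]
    rw [key, key, e1.fderiv_eq, e2.fderiv_eq, (hasFDerivAt_comp_sq hC.pd2_diff).fderiv,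
      (h2im.fun_mul (hasFDerivAt_comp_sq hC.pd1_diff)).fderiv]
    rw [keldysh] at hK
    simp only at hK
    simp
    linear_combination hK

/-- The `2 × 2` matrix `(τ - τ₀) + N` with `N = (0, -s/δ; δ, 0)`, so that `N² = -s`: a square root
of `-s` which is affine in `s`. The scale `δ` makes the norm small near `(0, τ₀)`. -/
noncomputable def rootMat (τ₀ δ : ℝ) (q : ℝ × ℝ) : (ℝ × ℝ) →L[ℝ] (ℝ × ℝ) :=
  (q.2 - τ₀) • (1 : (ℝ × ℝ) →L[ℝ] (ℝ × ℝ))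
    - (q.1 / δ) • ((ContinuousLinearMap.inl ℝ ℝ ℝ).comp (ContinuousLinearMap.snd ℝ ℝ ℝ))
    + δ • ((ContinuousLinearMap.inr ℝ ℝ ℝ).comp (ContinuousLinearMap.fst ℝ ℝ ℝ))

lemma rootMat_apply (τ₀ δ : ℝ) (q v : ℝ × ℝ) :
    rootMat τ₀ δ q v = ((q.2 - τ₀) * v.1 - q.1 / δ * v.2, (q.2 - τ₀) * v.2 + δ * v.1) := by
  ext <;> simp [rootMat]

/-- For `s = w²` the powers of the matrix encode the powers of `(τ - τ₀) + i w`. -/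
lemma rootMat_pow_apply {τ₀ δ : ℝ} (hδ : δ ≠ 0) (w τ : ℝ) (n : ℕ) :
    (w * ((rootMat τ₀ δ (w ^ 2, τ) ^ n) (1, 0)).2
        = δ * (((τ - τ₀ : ℝ) + w * Complex.I : ℂ) ^ n).im) ∧
      ((rootMat τ₀ δ (w ^ 2, τ) ^ n) (1, 0)).1
        = (((τ - τ₀ : ℝ) + w * Complex.I : ℂ) ^ n).re := by
  induction n with
  | zero => simp
  | succ n ih =>
    obtain ⟨h1, h2⟩ := ih
    have e : (rootMat τ₀ δ (w ^ 2, τ) ^ (n + 1)) (1, 0)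
        = rootMat τ₀ δ (w ^ 2, τ) ((rootMat τ₀ δ (w ^ 2, τ) ^ n) (1, 0)) := by
      rw [pow_succ']; rfl
    rw [e, rootMat_apply, pow_succ' ((τ - τ₀ : ℝ) + w * Complex.I : ℂ) n]
    simp only [Complex.mul_im, Complex.mul_re, Complex.add_re, Complex.add_im, Complex.ofReal_re,
      Complex.ofReal_im, Complex.I_re, Complex.I_im, mul_zero, mul_one, sub_zero,
      zero_add, add_zero, ← h2]
    refine ⟨by linear_combination (τ - τ₀) * h1, ?_⟩
    field_simp
    linear_combination (-w) * h1

/-- The elliptic side: on `s ≥ 0` a solution of `keldysh u = 0` agrees with an analytic function. -/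
lemma exists_analytic_of_nonneg {u : ℝ × ℝ → ℝ} {τ₀ : ℝ}
    (hu : ∀ᶠ q in 𝓝 ((0 : ℝ), τ₀), ContDiffAt ℝ 2 u q ∧ keldysh u q = 0) :
    ∃ g : ℝ × ℝ → ℝ, AnalyticAt ℝ g (0, τ₀) ∧
      ∀ᶠ q in 𝓝 ((0 : ℝ), τ₀), 0 ≤ q.1 → u q = g q := by
  obtain ⟨R, hR, hball⟩ := Metric.eventually_nhds_iff_ball.1 (harmonicAt_comp_sq hu).eventually
  obtain ⟨F, hF, hFu⟩ :=
    InnerProductSpace.HarmonicOnNhd.exists_analyticOnNhd_ball_re_eq (fun x hx => hball x hx)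
  obtain ⟨p, r, hp⟩ := hF _ (Metric.mem_ball_self hR)
  obtain ⟨r', hr'0, hr'⟩ := ENNReal.lt_iff_exists_nnreal_btwn.1 hp.r_pos
  have hr'0 : (0 : ℝ) < r' := by exact_mod_cast hr'0
  set ρ : ℝ := min r' R with hρ
  have hρ0 : 0 < ρ := lt_min hr'0 hR
  set c : ℕ → ℝ := fun n => (p.coeff n).re with hc
  set A := (ℝ × ℝ) →L[ℝ] (ℝ × ℝ) with hA
  have hrad : (r' : ENNReal) ≤ (FormalMultilinearSeries.ofScalars A c).radius := by
    obtain ⟨C, -, hC⟩ := p.norm_mul_pow_le_of_lt_radius (lt_of_lt_of_le hr' hp.r_le)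
    refine FormalMultilinearSeries.le_radius_of_bound _ C fun n => le_trans ?_ (hC n)
    have : ‖FormalMultilinearSeries.ofScalars A c n‖ ≤ ‖p n‖ := by
      rw [FormalMultilinearSeries.ofScalars_norm, FormalMultilinearSeries.norm_apply_eq_norm_coef]
      exact Complex.abs_re_le_norm _
    gcongr
  have hr'E : (0 : ENNReal) < r' := by exact_mod_cast hr'0
  have hsum := (FormalMultilinearSeries.ofScalars A c).hasFPowerSeriesOnBall
    (lt_of_lt_of_le hr'E hrad)
  set δ : ℝ := ρ / 2 with hδ
  have hδ0 : 0 < δ := by positivity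
  set M := rootMat τ₀ δ with hM
  have hMan : AnalyticAt ℝ M (0, τ₀) := by
    have h1 : AnalyticAt ℝ (fun q : ℝ × ℝ => q.2 - τ₀) (0, τ₀) := analyticAt_snd.sub analyticAt_const
    have h2 : AnalyticAt ℝ (fun q : ℝ × ℝ => q.1 / δ) (0, τ₀) := analyticAt_fst.div_const
    exact ((h1.smul analyticAt_const).sub (h2.smul analyticAt_const)).add analyticAt_const
  have hM0 : ‖M (0, τ₀)‖ < ρ := by
    have : ‖M (0, τ₀)‖ ≤ δ := by
      refine ContinuousLinearMap.opNorm_le_bound _ hδ0.le fun v => ?_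
      rw [hM, rootMat_apply]
      simp only [sub_self, zero_mul, zero_div, zero_add, Prod.norm_def, Real.norm_eq_abs, abs_zero,
        abs_mul, abs_of_pos hδ0]
      refine max_le (by positivity) ?_
      gcongr
      exact le_max_left _ _
    linarith
  have hmem : ∀ x : A, ‖x‖ < ρ →
      x ∈ Metric.eball (0 : A) (FormalMultilinearSeries.ofScalars A c).radius := by
    intro x hx
    refine Metric.eball_subset_eball hrad ?_
    rw [Metric.mem_eball, edist_zero_right]
    have : ‖x‖₊ < r' := by
      rw [← NNReal.coe_lt_coe]
      exact lt_of_lt_of_le hx (min_le_left _ _)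
    exact_mod_cast this
  set ev : A →L[ℝ] ℝ := (ContinuousLinearMap.fst ℝ ℝ ℝ).comp
    (ContinuousLinearMap.apply ℝ (ℝ × ℝ) ((1 : ℝ), (0 : ℝ))) with hev
  refine ⟨fun q => ev ((FormalMultilinearSeries.ofScalars A c).sum (M q)), ?_, ?_⟩
  · have h1 := hsum.analyticAt_of_mem (hmem _ hM0)
    exact (ev.analyticAt _).comp (h1.comp hMan)
  · have hn1 : ∀ᶠ q in 𝓝 ((0 : ℝ), τ₀), ‖M q‖ < ρ :=
      hMan.continuousAt.norm.eventually_lt continuousAt_const hM0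
    have hn2 : ∀ᶠ q in 𝓝 ((0 : ℝ), τ₀), |q.2 - τ₀| + √q.1 < ρ := by
      have : Continuous fun q : ℝ × ℝ => |q.2 - τ₀| + √q.1 := by fun_prop
      exact this.continuousAt.eventually_lt continuousAt_const (by simpa using hρ0)
    filter_upwards [hn1, hn2] with q hq1 hq2 hq0
    set w := √q.1 with hw
    have hw2 : w ^ 2 = q.1 := Real.sq_sqrt hq0
    have hw0 : 0 ≤ w := Real.sqrt_nonneg _
    have hs : HasSum (fun n => c n * ((M q ^ n) (1, 0)).1)
        (ev ((FormalMultilinearSeries.ofScalars A c).sum (M q))) := by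
      have h1 := hsum.hasSum (hmem _ hq1)
      rw [zero_add] at h1
      have h2 := ev.hasSum h1
      have e : (fun n => c n * ((M q ^ n) (1, 0)).1) = fun n =>
          ev (FormalMultilinearSeries.ofScalars A c n fun _ => M q) := by
        funext n
        rw [FormalMultilinearSeries.ofScalars_apply_eq]
        rw [map_smul, smul_eq_mul]
        rfl
      rw [e]
      exact h2
    -- the harmonic function at `τ ± i w`
    have hy : ∀ v : ℝ, |v| = w → HasSum
        (fun n => (p.coeff n * ((q.2 - τ₀ : ℝ) + v * Complex.I : ℂ) ^ n).re) (u q) := by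
      intro v hv
      set y : ℂ := (q.2 - τ₀ : ℝ) + v * Complex.I with hy
      have hynorm : ‖y‖ < ρ := by
        refine lt_of_le_of_lt (norm_add_le _ _) ?_
        simpa [hv, ← Complex.ofReal_sub] using hq2
      have h1 := hp.hasSum (y := y) (by
        rw [Metric.mem_eball, edist_zero_right]
        refine lt_trans ?_ hr'
        have : ‖y‖₊ < r' := by
          rw [← NNReal.coe_lt_coe]
          exact lt_of_lt_of_le hynorm (min_le_left _ _)
        exact_mod_cast this)
      have h2 := Complex.reCLM.hasSum h1
      have h3 : (F (τ₀ + y)).re = u q := by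
        have := hFu (x := τ₀ + y) (by
          rw [Metric.mem_ball, dist_eq_norm, add_sub_cancel_left]
          exact lt_of_lt_of_le hynorm (min_le_right _ _))
        simp only at this
        rw [this]
        have e : (τ₀ + y).im ^ 2 = q.1 := by simp [hy, ← hw2, ← hv]
        have e' : (τ₀ + y).re = q.2 := by simp [hy]
        rw [e, e']
      rw [← h3]
      have e : (fun n => (p.coeff n * y ^ n).re) = fun n =>
          Complex.reCLM (p n fun _ => y) := by
        funext n
        rw [FormalMultilinearSeries.apply_eq_pow_smul_coeff, smul_eq_mul, mul_comm]
        rfl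
      rw [e]
      exact h2
    have h1 := hy w (abs_of_nonneg hw0)
    have h2 := hy (-w) (by rw [abs_neg, abs_of_nonneg hw0])
    have h3 := (h1.add h2).div_const 2
    rw [add_self_div_two] at h3
    have hfun : (fun n => ((p.coeff n * ((q.2 - τ₀ : ℝ) + w * Complex.I : ℂ) ^ n).re
        + (p.coeff n * ((q.2 - τ₀ : ℝ) + (-w : ℝ) * Complex.I : ℂ) ^ n).re) / 2)
        = fun n => c n * ((M q ^ n) (1, 0)).1 := by
      funext n
      have hqe : q = (w ^ 2, q.2) := by rw [hw2]
      have hpw := (rootMat_pow_apply hδ0.ne' (τ₀ := τ₀) w q.2 n).2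
      rw [← hqe] at hpw
      rw [hM, hpw]
      have hconj : ((q.2 - τ₀ : ℝ) + (-w : ℝ) * Complex.I : ℂ)
          = (starRingEnd ℂ) ((q.2 - τ₀ : ℝ) + w * Complex.I : ℂ) := by
        simp
      rw [hconj, ← map_pow]
      simp only [Complex.mul_re, Complex.conj_re, Complex.conj_im, hc]
      ring
    rw [hfun] at h3
    exact h3.unique hs

/-! ### Analyticity across the degeneracy line -/

/-- Solutions of `keldysh u = 0` are analytic at the points of the degeneracy line `s = 0`. -/
lemma analyticAt_of_keldysh {u : ℝ × ℝ → ℝ} {τ₀ : ℝ}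
    (hu : ∀ᶠ q in 𝓝 ((0 : ℝ), τ₀), ContDiffAt ℝ 2 u q ∧ keldysh u q = 0) :
    AnalyticAt ℝ u (0, τ₀) := by
  obtain ⟨g, hg, hug⟩ := exists_analytic_of_nonneg hu
  obtain ⟨r, hr, hball⟩ := Metric.eventually_nhds_iff_ball.1
    (hu.and (hg.eventually_analyticAt.and hug))
  have hKan : AnalyticOnNhd ℝ (keldysh g) (Metric.ball ((0 : ℝ), τ₀) r) := by
    intro q hq
    have h := (hball q hq).2.1
    exact (((analyticAt_const.mul analyticAt_fst).mul h.pd1_of.pd1_of).add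
      (analyticAt_const.mul h.pd1_of)).add h.pd2_of.pd2_of
  -- `keldysh g` vanishes for `s > 0`, hence everywhere by the identity theorem
  have hKg : EqOn (keldysh g) 0 (Metric.ball ((0 : ℝ), τ₀) r) := by
    have hmem : ((r / 2 : ℝ), τ₀) ∈ Metric.ball ((0 : ℝ), τ₀) r := by
      simp [Prod.dist_eq, abs_of_pos hr, hr]
    refine hKan.eqOn_zero_of_preconnected_of_eventuallyEq_zero
      (convex_ball _ _).isPreconnected hmem ?_
    have hpos : ∀ᶠ q in 𝓝 ((r / 2 : ℝ), τ₀), 0 < q.1 :=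
      continuousAt_const.eventually_lt continuousAt_fst (by simpa using hr)
    filter_upwards [Metric.isOpen_ball.eventually_mem hmem, hpos] with q hq hq0
    have hpos' : ∀ᶠ x in 𝓝 q, 0 < x.1 := continuousAt_const.eventually_lt continuousAt_fst hq0
    have : u =ᶠ[𝓝 q] g := by
      filter_upwards [Metric.isOpen_ball.eventually_mem hq, hpos'] with x hx hx0
      exact (hball x hx).2.2 hx0.le
    rw [← keldysh_congr this]
    exact (hball q hq).1.2
  obtain ⟨ε, hε, hε1, hε2⟩ : ∃ ε > 0, ε ^ 2 < r ∧ 2 * ε < r := by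
    refine ⟨min 1 r / 3, by positivity, ?_, ?_⟩
    · have h1 : min 1 r ≤ 1 := min_le_left _ _
      have h2 : min 1 r ≤ r := min_le_right _ _
      have h3 : 0 < min 1 r := by positivity
      nlinarith
    · have h2 : min 1 r ≤ r := min_le_right _ _
      have h3 : 0 < min 1 r := by positivity
      linarith
  have hin : ∀ s τ, |s| < ε ^ 2 → |τ - τ₀| < 2 * ε → (s, τ) ∈ Metric.ball ((0 : ℝ), τ₀) r := by
    intro s τ h1 h2
    simp only [Metric.mem_ball, Prod.dist_eq, Real.dist_eq, sub_zero, max_lt_iff]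
    exact ⟨h1.trans hε1, h2.trans hε2⟩
  have hgC : ∀ q ∈ Metric.ball ((0 : ℝ), τ₀) r, ContDiffAt ℝ 2 g q :=
    fun q hq => (hball q hq).2.1.contDiffAt
  have hv : ∀ s τ, |s| < ε ^ 2 → |τ - τ₀| < 2 * ε → ContDiffAt ℝ 2 (u - g) (s, τ) :=
    fun s τ h1 h2 => (hball _ (hin s τ h1 h2)).1.1.sub (hgC _ (hin s τ h1 h2))
  have hK : ∀ s τ, |s| < ε ^ 2 → |τ - τ₀| < 2 * ε → keldysh (u - g) (s, τ) = 0 := by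
    intro s τ h1 h2
    have hq := hin s τ h1 h2
    rw [keldysh_sub (hball _ hq).1.1 (hgC _ hq), (hball _ hq).1.2, hKg hq]
    simp
  have h0 : ∀ τ, |τ - τ₀| < 2 * ε → (u - g) (0, τ) = 0 := by
    intro τ h2
    have hq := hin 0 τ (by simpa using by positivity) h2
    rw [Pi.sub_apply, (hball _ hq).2.2 le_rfl, sub_self]
  refine hg.congr ?_
  have hn : ∀ᶠ q in 𝓝 ((0 : ℝ), τ₀), |q.1| < ε ^ 2 ∧ |q.2 - τ₀| < ε := by
    refine Eventually.and ?_ ?_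
    · have : Continuous fun q : ℝ × ℝ => |q.1| := by fun_prop
      exact this.continuousAt.eventually_lt continuousAt_const (by simpa using by positivity)
    · have : Continuous fun q : ℝ × ℝ => |q.2 - τ₀| := by fun_prop
      exact this.continuousAt.eventually_lt continuousAt_const (by simpa using hε)
  filter_upwards [hn] with q hq
  rcases le_total 0 q.1 with h | h
  · exact ((hball q (hin q.1 q.2 hq.1 (by linarith [hq.2]))).2.2 h).symm
  · have hw2 : (√(-q.1)) ^ 2 = -q.1 := Real.sq_sqrt (by linarith)
    have hwε : √(-q.1) < ε := by
      rw [Real.sqrt_lt' hε, ← abs_of_nonpos h]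
      exact hq.1
    have := eq_zero_of_keldysh_neg hv hK h0 (Real.sqrt_nonneg (-q.1)) hwε hq.2
    rw [hw2, neg_neg, Pi.sub_apply, sub_eq_zero] at this
    exact this.symm

lemma pd1_comb {a b F G : ℝ × ℝ → ℝ} {q : ℝ × ℝ} {a' b' : ℝ}
    (ha : DifferentiableAt ℝ a q) (hb : DifferentiableAt ℝ b q)
    (hF : DifferentiableAt ℝ F q) (hG : DifferentiableAt ℝ G q)
    (ha' : HasDerivAt (fun r => a (r, q.2)) a' q.1)
    (hb' : HasDerivAt (fun r => b (r, q.2)) b' q.1) :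
    pd1 (fun x => a x * F x + b x * G x) q
      = a' * F q + a q * pd1 F q + (b' * G q + b q * pd1 G q) :=
  pd1_eq_of_hasDerivAt ((ha.mul hF).add (hb.mul hG))
    ((ha'.mul (hasDerivAt_fst hF)).add (hb'.mul (hasDerivAt_fst hG)))

lemma pd2_comb {a b F G : ℝ × ℝ → ℝ} {q : ℝ × ℝ} {a' b' : ℝ}
    (ha : DifferentiableAt ℝ a q) (hb : DifferentiableAt ℝ b q)
    (hF : DifferentiableAt ℝ F q) (hG : DifferentiableAt ℝ G q)
    (ha' : HasDerivAt (fun r => a (q.1, r)) a' q.2)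
    (hb' : HasDerivAt (fun r => b (q.1, r)) b' q.2) :
    pd2 (fun x => a x * F x + b x * G x) q
      = a' * F q + a q * pd2 F q + (b' * G q + b q * pd2 G q) :=
  pd2_eq_of_hasDerivAt ((ha.mul hF).add (hb.mul hG))
    ((ha'.mul (hasDerivAt_snd hF)).add (hb'.mul (hasDerivAt_snd hG)))

/-! ### The first order system in hodograph coordinates -/

/-- The first order system linking `Z = T + X`, `Y` and `V = T - X` in hodograph coordinates. -/
def FirstOrder (Z Y V : ℝ × ℝ → ℝ) (q : ℝ × ℝ) : Prop :=
  pd1 Y q = q.2 * pd1 Z q + (-1 / 2) * pd2 Z q ∧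
  pd2 Y q = (2 * q.1) * pd1 Z q + q.2 * pd2 Z q ∧
  pd1 V q = (q.2 ^ 2 - q.1) * pd1 Z q + (-q.2) * pd2 Z q ∧
  pd2 V q = (4 * q.2 * q.1) * pd1 Z q + (q.2 ^ 2 - q.1) * pd2 Z q

/-- The compatibility condition `Y_sτ = Y_τs` of the first order system is `keldysh Z = 0`, and
`keldysh Y`, `keldysh V` are multiples of `keldysh Z`. -/
lemma keldysh_of_firstOrder {Z Y V : ℝ × ℝ → ℝ} {q : ℝ × ℝ} (hZ : ContDiffAt ℝ 2 Z q)
    (hY : ContDiffAt ℝ 2 Y q) (h : ∀ᶠ x in 𝓝 q, FirstOrder Z Y V x) :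
    keldysh Z q = 0 ∧ keldysh Y q = 0 ∧ keldysh V q = 0 := by
  have hY1 : pd1 Y =ᶠ[𝓝 q] fun x => x.2 * pd1 Z x + (-1 / 2) * pd2 Z x := h.mono fun x hx => hx.1
  have hY2 : pd2 Y =ᶠ[𝓝 q] fun x => (2 * x.1) * pd1 Z x + x.2 * pd2 Z x :=
    h.mono fun x hx => hx.2.1
  have hV1 : pd1 V =ᶠ[𝓝 q] fun x => (x.2 ^ 2 - x.1) * pd1 Z x + (-x.2) * pd2 Z x :=
    h.mono fun x hx => hx.2.2.1
  have hV2 : pd2 V =ᶠ[𝓝 q] fun x => (4 * x.2 * x.1) * pd1 Z x + (x.2 ^ 2 - x.1) * pd2 Z x :=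
    h.mono fun x hx => hx.2.2.2
  obtain ⟨e1, e2, e3, e4⟩ := h.self_of_nhds
  have hs := pd_symm hZ
  have hsY := pd_symm hY
  have d1 := hZ.pd1_diff
  have d2 := hZ.pd2_diff
  have Y11 := (pd1_congr hY1).trans (pd1_comb (q := q) (a' := 0) (b' := 0) (by fun_prop)
    (by fun_prop) d1 d2 (hasDerivAt_const _ _) (hasDerivAt_const _ _))
  have Y12 := (pd2_congr hY1).trans (pd2_comb (q := q) (a' := 1) (b' := 0) (by fun_prop)
    (by fun_prop) d1 d2 (hasDerivAt_id _) (hasDerivAt_const _ _))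
  have Y21 := (pd1_congr hY2).trans (pd1_comb (q := q) (a' := 2) (b' := 0) (by fun_prop)
    (by fun_prop) d1 d2 (by simpa using (hasDerivAt_id q.1).const_mul (2 : ℝ))
    (hasDerivAt_const _ _))
  have Y22 := (pd2_congr hY2).trans (pd2_comb (q := q) (a' := 0) (b' := 1) (by fun_prop)
    (by fun_prop) d1 d2 (hasDerivAt_const q.2 (2 * q.1)) (hasDerivAt_id _))
  have V11 := (pd1_congr hV1).trans (pd1_comb (q := q) (a' := -1) (b' := 0) (by fun_prop)
    (by fun_prop) d1 d2 (by simpa using (hasDerivAt_id q.1).const_sub (q.2 ^ 2))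
    (hasDerivAt_const q.1 (-q.2)))
  have V22 := (pd2_congr hV2).trans (pd2_comb (q := q) (a' := 4 * q.1) (b' := 2 * q.2)
    (by fun_prop) (by fun_prop) d1 d2
    (by simpa using ((hasDerivAt_id q.2).const_mul (4 : ℝ)).mul_const q.1)
    (by simpa using ((hasDerivAt_id q.2).pow 2).sub_const q.1))
  have kZ : keldysh Z q = 0 := by
    rw [keldysh]
    linear_combination 2 * (hsY - Y21 + Y12) - 2 * q.2 * hs
  refine ⟨kZ, ?_, ?_⟩
  · rw [keldysh] at kZ ⊢
    rw [Y11, Y22, e1]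
    linear_combination q.2 * kZ - 2 * q.1 * hs
  · rw [keldysh] at kZ ⊢
    rw [V11, V22, e3]
    linear_combination (q.2 ^ 2 - q.1) * kZ - 4 * q.1 * q.2 * hs

/-- The pointwise algebra behind the first order system: the derivatives of the relations
`a = 2 / m - 1`, `b = 2 τ / m`, `m = 1 + s + τ²` between gradient and hodograph coordinates,
together with the zero mean curvature equation, are linear in the Jacobian of the inverse map. -/
lemma firstOrder_algebra {a b a1 a2 b2 s τ m Xs Xt Ys Yt : ℝ} (hm : m ≠ 0)
    (hms : m = 1 + s + τ ^ 2) (ha : a = 2 / m - 1) (hb : b = 2 * τ / m)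
    (h1 : a1 * Xs + a2 * Ys = -2 / m ^ 2) (h2 : a1 * Xt + a2 * Yt = -4 * τ / m ^ 2)
    (h3 : a2 * Xs + b2 * Ys = -2 * τ / m ^ 2)
    (h4 : a2 * Xt + b2 * Yt = 2 * (1 + s - τ ^ 2) / m ^ 2)
    (hz : (1 - b ^ 2) * a1 + 2 * a * b * a2 + (1 - a ^ 2) * b2 = 0) :
    Ys = τ * (a * Xs + b * Ys + Xs) + (-1 / 2) * (a * Xt + b * Yt + Xt) ∧
    Yt = (2 * s) * (a * Xs + b * Ys + Xs) + τ * (a * Xt + b * Yt + Xt) ∧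
    a * Xs + b * Ys - Xs
      = (τ ^ 2 - s) * (a * Xs + b * Ys + Xs) + (-τ) * (a * Xt + b * Yt + Xt) ∧
    a * Xt + b * Yt - Xt
      = (4 * τ * s) * (a * Xs + b * Ys + Xs) + (τ ^ 2 - s) * (a * Xt + b * Yt + Xt) := by
  have ham : m * a = 2 - m := by rw [ha]; field_simp
  have hbm : m * b = 2 * τ := by rw [hb]; field_simp
  rw [eq_div_iff (pow_ne_zero 2 hm)] at h1 h2 h3 h4
  have G2 : (1 + s - τ ^ 2) * Ys + Xt + τ * Yt - 2 * τ * Xs = 0 := by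
    linear_combination (-1 / 2) * (Xs * h2 - Xt * h1 - Yt * h3 + Ys * h4)
  have hz' : (m ^ 2 - 4 * τ ^ 2) * a1 + 4 * τ * (2 - m) * a2 + 4 * (s + τ ^ 2) * b2 = 0 := by
    linear_combination m ^ 2 * hz + a1 * (m * b + 2 * τ) * hbm
      - 2 * a2 * (m * b * ham + (2 - m) * hbm) + b2 * (m * a + 2 - m) * ham - 4 * b2 * hms
  have R : (m ^ 2 - 4 * τ ^ 2) * (2 * τ * Ys - Yt) + 4 * τ * (2 - m) * (Xt - 2 * τ * Xs)
      + 4 * (s + τ ^ 2) * ((1 + s - τ ^ 2) * Xs + τ * Xt) = 0 := by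
    linear_combination ((Xs * Yt - Xt * Ys) * m ^ 2 / 2) * hz'
      - (m ^ 2 - 4 * τ ^ 2) / 2 * (Yt * h1 - Ys * h2)
      - 2 * τ * (2 - m) * (Xs * h2 - Xt * h1) - 2 * (s + τ ^ 2) * (Xs * h4 - Xt * h3)
  have G1 : (1 + s - τ ^ 2) * Yt - 2 * τ * Xt - 4 * s * Xs - 4 * s * τ * Ys = 0 := by
    refine mul_left_cancel₀ hm ?_
    rw [hms] at R ⊢
    linear_combination -R - 2 * τ * (s + τ ^ 2 - 1) * G2
  refine ⟨mul_left_cancel₀ hm ?_, mul_left_cancel₀ hm ?_, mul_left_cancel₀ hm ?_,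
    mul_left_cancel₀ hm ?_⟩
  · linear_combination G2 - τ * (Xs * ham + Ys * hbm) + (1 / 2) * (Xt * ham + Yt * hbm) + Ys * hms
  · linear_combination G1 - 2 * s * (Xs * ham + Ys * hbm) - τ * (Xt * ham + Yt * hbm) + Yt * hms
  · linear_combination 2 * τ * G2 + (1 - (τ ^ 2 - s)) * (Xs * ham + Ys * hbm)
      + τ * (Xt * ham + Yt * hbm) - 2 * Xs * hms
  · linear_combination 2 * τ * G1 - (4 * τ * s) * (Xs * ham + Ys * hbm)
      + (1 - (τ ^ 2 - s)) * (Xt * ham + Yt * hbm) - 2 * Xt * hms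

lemma pd1_comp {g X Y : ℝ × ℝ → ℝ} {q : ℝ × ℝ} (hg : DifferentiableAt ℝ g (X q, Y q))
    (hX : DifferentiableAt ℝ X q) (hY : DifferentiableAt ℝ Y q) :
    pd1 (fun x => g (X x, Y x)) q
      = pd1 g (X q, Y q) * pd1 X q + pd2 g (X q, Y q) * pd1 Y q :=
  pd1_eq_of_hasDerivAt (DifferentiableAt.comp (g := g) q hg (hX.prodMk hY))
    (hasDerivAt_comp_curve (α := fun r => X (r, q.2)) (β := fun r => Y (r, q.2)) hg
      (hasDerivAt_fst hX) (hasDerivAt_fst hY))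

lemma pd2_comp {g X Y : ℝ × ℝ → ℝ} {q : ℝ × ℝ} (hg : DifferentiableAt ℝ g (X q, Y q))
    (hX : DifferentiableAt ℝ X q) (hY : DifferentiableAt ℝ Y q) :
    pd2 (fun x => g (X x, Y x)) q
      = pd1 g (X q, Y q) * pd2 X q + pd2 g (X q, Y q) * pd2 Y q :=
  pd2_eq_of_hasDerivAt (DifferentiableAt.comp (g := g) q hg (hX.prodMk hY))
    (hasDerivAt_comp_curve (α := fun r => X (q.1, r)) (β := fun r => Y (q.1, r)) hg
      (hasDerivAt_snd hX) (hasDerivAt_snd hY))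

lemma pd1_lin {F G : ℝ × ℝ → ℝ} {q : ℝ × ℝ} (a b : ℝ)
    (hF : DifferentiableAt ℝ F q) (hG : DifferentiableAt ℝ G q) :
    pd1 (fun x => a * F x + b * G x) q = a * pd1 F q + b * pd1 G q := by
  have := pd1_comb (a := fun _ => a) (b := fun _ => b) (by fun_prop) (by fun_prop) hF hG
    (hasDerivAt_const _ _) (hasDerivAt_const _ _)
  simpa using this

lemma pd2_lin {F G : ℝ × ℝ → ℝ} {q : ℝ × ℝ} (a b : ℝ)
    (hF : DifferentiableAt ℝ F q) (hG : DifferentiableAt ℝ G q) :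
    pd2 (fun x => a * F x + b * G x) q = a * pd2 F q + b * pd2 G q := by
  have := pd2_comb (a := fun _ => a) (b := fun _ => b) (by fun_prop) (by fun_prop) hF hG
    (hasDerivAt_const _ _) (hasDerivAt_const _ _)
  simpa using this

/-! ### The hodograph map -/

/-- `m = 1 + s + τ²`, equal to `2 / (1 + f_x)` in hodograph coordinates. -/
def hodM (q : ℝ × ℝ) : ℝ := 1 + q.1 + q.2 ^ 2

lemma hasDerivAt_hodM_fst (q : ℝ × ℝ) : HasDerivAt (fun r => hodM (r, q.2)) 1 q.1 :=
  ((hasDerivAt_id q.1).const_add 1).add_const (q.2 ^ 2)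

lemma hasDerivAt_hodM_snd (q : ℝ × ℝ) : HasDerivAt (fun r => hodM (q.1, r)) (2 * q.2) q.2 :=
  (((hasDerivAt_id q.2).pow 2).const_add (1 + q.1)).congr_deriv (by simp)

lemma pd_gradX {q : ℝ × ℝ} (hm : hodM q ≠ 0) :
    pd1 (fun x => 2 / hodM x - 1) q = -2 / hodM q ^ 2 ∧
      pd2 (fun x => 2 / hodM x - 1) q = -4 * q.2 / hodM q ^ 2 := by
  have hd : DifferentiableAt ℝ (fun x => 2 / hodM x - 1) q := by
    unfold hodM at *
    fun_prop (disch := assumption)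
  have h1 := hasDerivAt_hodM_fst q
  have h2 := hasDerivAt_hodM_snd q
  refine ⟨pd1_eq_of_hasDerivAt hd ?_, pd2_eq_of_hasDerivAt hd ?_⟩
  · refine (((hasDerivAt_const _ (2 : ℝ)).div h1 hm).sub_const 1).congr_deriv ?_
    simp
  · refine (((hasDerivAt_const _ (2 : ℝ)).div h2 hm).sub_const 1).congr_deriv ?_
    simp only [zero_mul, zero_sub]
    ring

lemma pd_gradY {q : ℝ × ℝ} (hm : hodM q ≠ 0) :
    pd1 (fun x => 2 * x.2 / hodM x) q = -2 * q.2 / hodM q ^ 2 ∧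
      pd2 (fun x => 2 * x.2 / hodM x) q = 2 * (1 + q.1 - q.2 ^ 2) / hodM q ^ 2 := by
  have hd : DifferentiableAt ℝ (fun x : ℝ × ℝ => 2 * x.2 / hodM x) q := by
    unfold hodM at *
    fun_prop (disch := assumption)
  have h1 := hasDerivAt_hodM_fst q
  have h2 := hasDerivAt_hodM_snd q
  refine ⟨pd1_eq_of_hasDerivAt hd ?_, pd2_eq_of_hasDerivAt hd ?_⟩
  · refine ((hasDerivAt_const q.1 (2 * q.2)).div h1 hm).congr_deriv ?_
    simp
  · refine (((hasDerivAt_id q.2).const_mul (2 : ℝ)).div h2 hm).congr_deriv ?_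
    simp only [id, mul_one]
    congr 1
    rw [hodM]
    ring

/-- Hodograph coordinates `(s, τ) = (B / (1 + f_x)², f_y / (1 + f_x))`: the gradient of `f` in
stereographic projection, with `s` recording the causal type. -/
noncomputable def hodo (f : ℝ × ℝ → ℝ) (q : ℝ × ℝ) : ℝ × ℝ :=
  (Bfun f q / (1 + pd1 f q) ^ 2, pd2 f q / (1 + pd1 f q))

/-- The gradient of `f` is recovered from the hodograph coordinates. -/
lemma grad_of_hodo {f : ℝ × ℝ → ℝ} {q : ℝ × ℝ} (h : 1 + pd1 f q ≠ 0) :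
    hodM (hodo f q) ≠ 0 ∧ pd1 f q = 2 / hodM (hodo f q) - 1 ∧
      pd2 f q = 2 * (hodo f q).2 / hodM (hodo f q) := by
  have e : hodM (hodo f q) = 2 / (1 + pd1 f q) := by
    simp only [hodM, hodo, Bfun]
    field_simp
    ring
  rw [e]
  refine ⟨by positivity, ?_, ?_⟩
  · field_simp
    ring
  · simp only [hodo]
    field_simp

lemma contDiffAt_hodo {f : ℝ × ℝ → ℝ} {q : ℝ × ℝ} (hf : ContDiffAt ℝ 3 f q)
    (h : 1 + pd1 f q ≠ 0) : ContDiffAt ℝ 2 (hodo f) q := by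
  have h1 : ContDiffAt ℝ 2 (pd1 f) q := hf.pd1_of (by norm_num)
  have h2 : ContDiffAt ℝ 2 (pd2 f) q := hf.pd2_of (by norm_num)
  have h3 : ContDiffAt ℝ 2 (fun x => 1 + pd1 f x) q := contDiffAt_const.add h1
  have hB : ContDiffAt ℝ 2 (Bfun f) q := (contDiffAt_const.sub (h1.pow 2)).sub (h2.pow 2)
  exact (hB.div (h3.pow 2) (pow_ne_zero 2 h)).prodMk (h2.div h3 h)

/-- At a non-degenerate point of type change the Hessian of `f` is injective: with `n = ∇f` the
equation gives `⟨Hn, n⟩ = 0`, while `Hn = -∇B / 2 ≠ 0`. -/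
lemma hessian_injective {f : ℝ × ℝ → ℝ} {p v : ℝ × ℝ} (hf : ContDiffAt ℝ 2 f p)
    (hz : ZMCAt f p) (hB : Bfun f p = 0)
    (hgrad : (pd1 (Bfun f) p, pd2 (Bfun f) p) ≠ (0, 0))
    (h1 : fderiv ℝ (pd1 f) p v = 0) (h2 : fderiv ℝ (pd2 f) p v = 0) : v = 0 := by
  have hd1 := hf.pd1_diff
  have hd2 := hf.pd2_diff
  have hdB : DifferentiableAt ℝ (Bfun f) p :=
    ((differentiableAt_const _).sub (hd1.pow 2)).sub (hd2.pow 2)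
  have B1 : pd1 (Bfun f) p = -2 * (pd1 f p * pd1 (pd1 f) p + pd2 f p * pd1 (pd2 f) p) := by
    refine pd1_eq_of_hasDerivAt hdB ?_
    refine ((((hasDerivAt_fst hd1).pow 2).const_sub 1).sub
      ((hasDerivAt_fst hd2).pow 2)).congr_deriv ?_
    simp
    ring
  have B2 : pd2 (Bfun f) p = -2 * (pd1 f p * pd2 (pd1 f) p + pd2 f p * pd2 (pd2 f) p) := by
    refine pd2_eq_of_hasDerivAt hdB ?_
    refine ((((hasDerivAt_snd hd1).pow 2).const_sub 1).sub
      ((hasDerivAt_snd hd2).pow 2)).congr_deriv ?_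
    simp
    ring
  rw [fderiv_apply_eq_pd] at h1 h2
  rw [pd_symm hf] at B1 h2
  rw [ZMCAt] at hz
  rw [Bfun] at hB
  generalize pd1 f p = a at *
  generalize pd2 f p = b at *
  generalize pd1 (pd1 f) p = a1 at *
  generalize pd2 (pd1 f) p = a2 at *
  generalize pd2 (pd2 f) p = b2 at *
  have e0 : a * (a * a1 + b * a2) + b * (a * a2 + b * b2) = 0 := by
    linear_combination hz - (a1 + b2) * hB
  have e1 : v.1 * (a * a1 + b * a2) + v.2 * (a * a2 + b * b2) = 0 := by
    linear_combination a * h1 + b * h2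
  have hne : a * a1 + b * a2 ≠ 0 ∨ a * a2 + b * b2 ≠ 0 := by
    by_contra! h
    apply hgrad
    rw [B1, B2, h.1, h.2]
    simp
  have e2 : v.1 * b - v.2 * a = 0 := by
    rcases hne with h | h
    · refine mul_right_cancel₀ h ?_
      linear_combination b * e1 - v.2 * e0
    · refine mul_right_cancel₀ h ?_
      linear_combination v.1 * e0 - a * e1
  have v1 : v.1 = (v.1 * a + v.2 * b) * a := by linear_combination v.1 * hB + b * e2
  have v2 : v.2 = (v.1 * a + v.2 * b) * b := by linear_combination v.2 * hB - a * e2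
  have hk : v.1 * a + v.2 * b = 0 := by
    generalize v.1 * a + v.2 * b = k at *
    rw [v1, v2] at h1 h2
    rcases hne with h | h
    · refine mul_right_cancel₀ h ?_
      linear_combination h1
    · refine mul_right_cancel₀ h ?_
      linear_combination h2
  rw [hk, zero_mul] at v1 v2
  exact Prod.ext v1 v2

/-- The gradient of `f` is a smooth function of the hodograph coordinates, so the kernel of the
derivative of `hodo f` lies in the kernel of the Hessian. -/
lemma hodo_fderiv_injective {f : ℝ × ℝ → ℝ} {p : ℝ × ℝ} (hf : ContDiffAt ℝ 3 f p)
    (hz : ZMCAt f p) (hB : Bfun f p = 0)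
    (hgrad : (pd1 (Bfun f) p, pd2 (Bfun f) p) ≠ (0, 0)) (hx : 1 + pd1 f p ≠ 0) :
    Function.Injective (fderiv ℝ (hodo f) p) := by
  have hΨ := (contDiffAt_hodo hf hx).differentiableAt (by norm_num)
  have hm := (grad_of_hodo hx).1
  have hev : ∀ᶠ q in 𝓝 p, 1 + pd1 f q ≠ 0 :=
    (continuousAt_const.add (hf.pd1_of (m := 2) (by norm_num)).continuousAt).eventually_ne hx
  have d1 : DifferentiableAt ℝ (fun x => 2 / hodM x - 1) (hodo f p) := by
    unfold hodM at *
    fun_prop (disch := assumption)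
  have d2 : DifferentiableAt ℝ (fun x : ℝ × ℝ => 2 * x.2 / hodM x) (hodo f p) := by
    unfold hodM at *
    fun_prop (disch := assumption)
  have e1 : pd1 f =ᶠ[𝓝 p] (fun x => 2 / hodM x - 1) ∘ hodo f :=
    hev.mono fun q hq => (grad_of_hodo hq).2.1
  have e2 : pd2 f =ᶠ[𝓝 p] (fun x : ℝ × ℝ => 2 * x.2 / hodM x) ∘ hodo f :=
    hev.mono fun q hq => (grad_of_hodo hq).2.2
  refine (injective_iff_map_eq_zero _).2 fun v hv => ?_
  refine hessian_injective (hf.of_le (by norm_num)) hz hB hgrad ?_ ?_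
  · rw [e1.fderiv_eq, fderiv_comp _ d1 hΨ, ContinuousLinearMap.comp_apply, hv, map_zero]
  · rw [e2.fderiv_eq, fderiv_comp _ d2 hΨ, ContinuousLinearMap.comp_apply, hv, map_zero]

/-- If `K = (X, Y)` is a local inverse of the hodograph map, then `Z = f ∘ K + X`, `Y` and
`V = f ∘ K - X` satisfy the first order system. -/
lemma firstOrder_of_zmc {f X Y : ℝ × ℝ → ℝ} {q : ℝ × ℝ} (hX : DifferentiableAt ℝ X q)
    (hY : DifferentiableAt ℝ Y q) (hf : ContDiffAt ℝ 2 f (X q, Y q)) (hz : ZMCAt f (X q, Y q))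
    (hinv : ∀ᶠ x in 𝓝 q, 1 + pd1 f (X x, Y x) ≠ 0 ∧ hodo f (X x, Y x) = x) :
    FirstOrder (fun x => 1 * f (X x, Y x) + 1 * X x) Y
      (fun x => 1 * f (X x, Y x) + (-1) * X x) q := by
  have hgr : ∀ᶠ x in 𝓝 q, hodM x ≠ 0 ∧ pd1 f (X x, Y x) = 2 / hodM x - 1 ∧
      pd2 f (X x, Y x) = 2 * x.2 / hodM x := by
    filter_upwards [hinv] with x hx
    have := grad_of_hodo hx.1
    rwa [hx.2] at this
  obtain ⟨hm, ha, hb⟩ := hgr.self_of_nhds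
  have ea : (fun x => pd1 f (X x, Y x)) =ᶠ[𝓝 q] fun x => 2 / hodM x - 1 :=
    hgr.mono fun x hx => hx.2.1
  have eb : (fun x => pd2 f (X x, Y x)) =ᶠ[𝓝 q] fun x => 2 * x.2 / hodM x :=
    hgr.mono fun x hx => hx.2.2
  have h1 := (pd1_comp hf.pd1_diff hX hY).symm.trans ((pd1_congr ea).trans (pd_gradX hm).1)
  have h2 := (pd2_comp hf.pd1_diff hX hY).symm.trans ((pd2_congr ea).trans (pd_gradX hm).2)
  have h3 := (pd1_comp hf.pd2_diff hX hY).symm.trans ((pd1_congr eb).trans (pd_gradY hm).1)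
  have h4 := (pd2_comp hf.pd2_diff hX hY).symm.trans ((pd2_congr eb).trans (pd_gradY hm).2)
  rw [pd_symm hf] at h3 h4
  have hT : DifferentiableAt ℝ (fun x => f (X x, Y x)) q :=
    DifferentiableAt.comp (g := f) q hf.diff2 (hX.prodMk hY)
  have := firstOrder_algebra hm rfl ha hb h1 h2 h3 h4 hz
  rw [FirstOrder, pd1_lin _ _ hT hX, pd2_lin _ _ hT hX, pd1_lin _ _ hT hX, pd2_lin _ _ hT hX,
    pd1_comp hf.diff2 hX hY, pd2_comp hf.diff2 hX hY]
  simpa only [one_mul, neg_one_mul, ← sub_eq_add_neg] using this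

/-! ### Regularity of the graph -/

/-- The theorem at a point where the hodograph chart is available, i.e. where `f_x ≠ -1`. -/
lemma analyticAt_of_typeChange {f : ℝ × ℝ → ℝ} {p : ℝ × ℝ} (hf : ContDiffAt ℝ 3 f p)
    (hz : ∀ᶠ q in 𝓝 p, ZMCAt f q) (hB : Bfun f p = 0)
    (hgrad : (pd1 (Bfun f) p, pd2 (Bfun f) p) ≠ (0, 0)) (hx : 1 + pd1 f p ≠ 0) :
    AnalyticAt ℝ f p := by
  have hΨ := contDiffAt_hodo hf hx
  have hinj := hodo_fderiv_injective hf hz.self_of_nhds hB hgrad hx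
  set i : (ℝ × ℝ) ≃L[ℝ] (ℝ × ℝ) :=
    (LinearEquiv.ofInjectiveEndo (fderiv ℝ (hodo f) p : (ℝ × ℝ) →ₗ[ℝ] (ℝ × ℝ))
      hinj).toContinuousLinearEquiv with hi
  have hi' : (i : (ℝ × ℝ) →L[ℝ] (ℝ × ℝ)) = fderiv ℝ (hodo f) p := by
    ext <;> rfl
  have hΨ' : HasFDerivAt (hodo f) (i : (ℝ × ℝ) →L[ℝ] (ℝ × ℝ)) p := by
    rw [hi']
    exact (hΨ.differentiableAt (by norm_num)).hasFDerivAt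
  set e := hΨ.toOpenPartialHomeomorph (hodo f) hΨ' (by norm_num) with he
  have hes : p ∈ e.source := hΨ.mem_toOpenPartialHomeomorph_source hΨ' (by norm_num)
  have hec : (e : ℝ × ℝ → ℝ × ℝ) = hodo f := rfl
  have hP0 : e p = ((0 : ℝ), (hodo f p).2) := by
    rw [hec]
    refine Prod.ext ?_ rfl
    simp [hodo, hB]
  set τ₀ := (hodo f p).2 with hτ₀
  have het : ((0 : ℝ), τ₀) ∈ e.target := hP0 ▸ e.map_source hes
  have hsymm : e.symm (0, τ₀) = p := by rw [← hP0, e.left_inv hes]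
  have hK : ContDiffAt ℝ 2 e.symm (0, τ₀) := by
    refine e.contDiffAt_symm (f₀' := i) het ?_ ?_
    · rw [hsymm]; exact hΨ'
    · rw [hsymm]; exact hΨ
  set X : ℝ × ℝ → ℝ := fun x => (e.symm x).1 with hX
  set Y : ℝ × ℝ → ℝ := fun x => (e.symm x).2 with hY
  set Z : ℝ × ℝ → ℝ := fun x => 1 * f (X x, Y x) + 1 * X x with hZ
  set V : ℝ × ℝ → ℝ := fun x => 1 * f (X x, Y x) + (-1) * X x with hV
  have hgood : ∀ᶠ q in 𝓝 p, ContDiffAt ℝ 3 f q ∧ ZMCAt f q ∧ 1 + pd1 f q ≠ 0 :=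
    (hf.eventually (by simp)).and (hz.and
      ((continuousAt_const.add (hf.pd1_of (m := 2) (by norm_num)).continuousAt).eventually_ne hx))
  have hlim : Tendsto e.symm (𝓝 ((0 : ℝ), τ₀)) (𝓝 p) := by
    have := hK.continuousAt.tendsto
    rwa [hsymm] at this
  have hall : ∀ᶠ x in 𝓝 ((0 : ℝ), τ₀), (ContDiffAt ℝ 2 e.symm x ∧ hodo f (X x, Y x) = x) ∧
      ContDiffAt ℝ 3 f (X x, Y x) ∧ ZMCAt f (X x, Y x) ∧ 1 + pd1 f (X x, Y x) ≠ 0 :=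
    ((hK.eventually (by simp)).and (e.eventually_right_inverse het)).and (hlim.eventually hgood)
  have hsm : ∀ᶠ x in 𝓝 ((0 : ℝ), τ₀), (ContDiffAt ℝ 2 Z x ∧ ContDiffAt ℝ 2 Y x ∧
      ContDiffAt ℝ 2 V x) ∧ FirstOrder Z Y V x := by
    filter_upwards [hall.eventually_nhds] with x hx
    obtain ⟨⟨h1, h2⟩, h3, h4, h5⟩ := hx.self_of_nhds
    have hXx : ContDiffAt ℝ 2 X x := h1.fst
    have hYx : ContDiffAt ℝ 2 Y x := h1.snd
    have hf2 : ContDiffAt ℝ 2 f (X x, Y x) := h3.of_le (by norm_num)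
    have hTx : ContDiffAt ℝ 2 (fun x => f (X x, Y x)) x :=
      ContDiffAt.comp x (g := f) hf2 (hXx.prodMk hYx)
    refine ⟨⟨(contDiffAt_const.mul hTx).add (contDiffAt_const.mul hXx), hYx,
      (contDiffAt_const.mul hTx).add (contDiffAt_const.mul hXx)⟩, ?_⟩
    exact firstOrder_of_zmc hXx.diff2 hYx.diff2 hf2 h4 (hx.mono fun y hy => ⟨hy.2.2.2, hy.1.2⟩)
  have hkel : ∀ᶠ x in 𝓝 ((0 : ℝ), τ₀), (ContDiffAt ℝ 2 Z x ∧ keldysh Z x = 0) ∧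
      (ContDiffAt ℝ 2 Y x ∧ keldysh Y x = 0) ∧ (ContDiffAt ℝ 2 V x ∧ keldysh V x = 0) := by
    filter_upwards [hsm.eventually_nhds] with x hx
    obtain ⟨⟨h1, h2, h3⟩, -⟩ := hx.self_of_nhds
    obtain ⟨k1, k2, k3⟩ := keldysh_of_firstOrder h1 h2 (hx.mono fun y hy => hy.2)
    exact ⟨⟨h1, k1⟩, ⟨h2, k2⟩, ⟨h3, k3⟩⟩
  have aZ : AnalyticAt ℝ Z (0, τ₀) := analyticAt_of_keldysh (hkel.mono fun x hx => hx.1)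
  have aY : AnalyticAt ℝ Y (0, τ₀) := analyticAt_of_keldysh (hkel.mono fun x hx => hx.2.1)
  have aV : AnalyticAt ℝ V (0, τ₀) := analyticAt_of_keldysh (hkel.mono fun x hx => hx.2.2)
  have aX : AnalyticAt ℝ X (0, τ₀) := by
    have : X = fun x => (Z x - V x) / 2 := by
      funext x
      simp only [hZ, hV]
      ring
    rw [this]
    exact (aZ.sub aV).div_const
  have aT : AnalyticAt ℝ (fun x => f (e.symm x)) (0, τ₀) := by
    have : (fun x => f (e.symm x)) = fun x => (Z x + V x) / 2 := by
      funext x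
      simp only [hZ, hV, hX, hY, Prod.mk.eta]
      ring
    rw [this]
    exact (aZ.add aV).div_const
  have aK : AnalyticAt ℝ e.symm (0, τ₀) := aX.prod aY
  -- `e` is the inverse of the analytic map `e.symm` with invertible derivative
  have aΨ : AnalyticAt ℝ e p := by
    have h := e.symm.analyticAt_symm (a := p) (i := i.symm) (by simpa using hes)
      (by rw [e.symm_symm, hP0]; exact aK) (by
        rw [e.symm_symm, hP0]
        refine (e.hasFDerivAt_symm (f' := i) het ?_).fderiv
        rw [hsymm]
        exact hΨ')
    rwa [e.symm_symm] at h
  have hfe : (fun x => f (e.symm x)) ∘ e =ᶠ[𝓝 p] f := by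
    filter_upwards [e.open_source.mem_nhds hes] with q hq
    simp [e.left_inv hq]
  refine AnalyticAt.congr ?_ hfe
  exact AnalyticAt.comp (by rwa [hP0]) aΨ

lemma pd1_neg (u : ℝ × ℝ → ℝ) : pd1 (-u) = -pd1 u := by
  funext q
  simp only [pd1, fderiv_neg, Pi.neg_apply, _root_.neg_apply]

lemma pd2_neg (u : ℝ × ℝ → ℝ) : pd2 (-u) = -pd2 u := by
  funext q
  simp only [pd2, fderiv_neg, Pi.neg_apply, _root_.neg_apply]

lemma Bfun_neg (u : ℝ × ℝ → ℝ) : Bfun (-u) = Bfun u := by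
  funext q
  simp [Bfun, pd1_neg, pd2_neg]

lemma ZMCAt.neg {u : ℝ × ℝ → ℝ} {q : ℝ × ℝ} (h : ZMCAt u q) : ZMCAt (-u) q := by
  rw [ZMCAt] at h ⊢
  simp only [pd1_neg, pd2_neg, Pi.neg_apply]
  linear_combination -h

/-- regularity part of the fundamental theorem of type change, Gu, Klyachin:
    a C^∞ solution of the zero mean curvature equation is real analytic in a neighborhood
    of any non-degenerate point of type change. -/
theorem stmt18 (Ω : Set (ℝ × ℝ)) (hΩ : IsOpen Ω) (f : ℝ × ℝ → ℝ)
    (hf : ContDiffOn ℝ (⊤ : ℕ∞) f Ω) (hzmc : ∀ q ∈ Ω, ZMCAt f q)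
    (p : ℝ × ℝ) (hp : p ∈ Ω) (hB : Bfun f p = 0)
    (hgrad : (pd1 (Bfun f) p, pd2 (Bfun f) p) ≠ (0, 0)) :
    ∃ V : Set (ℝ × ℝ), IsOpen V ∧ p ∈ V ∧ V ⊆ Ω ∧ AnalyticOnNhd ℝ f V := by
  have hC : ContDiffAt ℝ 3 f p :=
    (hf.contDiffAt (hΩ.mem_nhds hp)).of_le (WithTop.coe_le_coe.2 (le_top : (3 : ℕ∞) ≤ ⊤))
  have hz : ∀ᶠ q in 𝓝 p, ZMCAt f q := (hΩ.eventually_mem hp).mono hzmc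
  have hA : AnalyticAt ℝ f p := by
    by_cases hx : 1 + pd1 f p = 0
    · -- here `f_x = -1`, so `-f` has `x`-derivative `1` and the chart applies to it
      have hx' : 1 + pd1 (-f) p ≠ 0 := by
        rw [pd1_neg, Pi.neg_apply]
        intro h
        linarith
      have := analyticAt_of_typeChange (f := -f) hC.neg (hz.mono fun q hq => hq.neg)
        (by rw [Bfun_neg, hB]) (by rwa [Bfun_neg]) hx'
      simpa using this.neg
    · exact analyticAt_of_typeChange hC hz hB hgrad hx
  refine ⟨{q | AnalyticAt ℝ f q} ∩ Ω, (isOpen_analyticAt ℝ f).inter hΩ, ⟨hA, hp⟩,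
    inter_subset_right, fun q hq => hq.1⟩
end

section
/- Let σ : (a, b) → ℝ² be a real analytic curve parametrized by arc length (|σ'(t)| = 1) which is locally convex (σ''(t) ≠ 0 for all t). Then for every t₀ ∈ (a, b) there exist a neighborhood V ⊆ ℝ² of σ(t₀), δ > 0, and a real analytic function ψ : V → ℝ satisfying the zero mean curvature equation (1 − ψ_y²) ψ_xx + 2 ψ_x ψ_y ψ_xy + (1 − ψ_x²) ψ_yy = 0 on V, such that, with B := 1 − ψ_x² − ψ_y²: (i) ψ(σ(t)) = t for |t − t₀| < δ; (ii) B(σ(t)) = 0 and ∇B(σ(t)) ≠ 0 for |t − t₀| < δ; and (iii) for each such t there is s₀ > 0 with B(σ(t) + s σ''(t)) < 0 and B(σ(t) − s σ''(t)) > 0 for 0 < s < s₀. Interpreted as a stream function of the virtual gas with ρc = 1, ψ describes a flow that changes from subsonic (B > 0) to supersonic (B < 0) across σ, with the acceleration vector σ'' pointing into the supersonic region. -/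
/-!
In null coordinates `(α, β)` the surface swept out by the midpoints of pairs of points of the null
curve `t ↦ (t, σ t)` has zero mean curvature, and it is the graph of a function `ψ` with
`ψ ((σ α + σ β) / 2) = (α + β) / 2`. With `α = u + v` and `β = u - v` the midpoint is even in `v`,
so it is an analytic function `P` of `(u, w)` with `w = v²`, also for `w < 0`. To define `P`
without complexifying, the power series of `σ` is evaluated at a `2 × 2` matrix `u + N` with
`N² = w` (`exists_even_part`). The differential of `P` at `w = 0` has columns `σ'` and `σ'' / 2`,
which are independent because `σ' ⊥ σ'' ≠ 0`; the analytic inverse function theorem then gives `ψ`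
as the `u`-component of the local inverse of `P` (`exists_stream`).

Everything else follows from the midpoint identity. Differentiating it gives
`dψ (σ' α) = dψ (σ' β) = 1` and `Hess ψ (σ' α, σ' β) = 0`, which for `σ' α ≠ σ' β` is the zero mean
curvature equation (`StreamAt.zmc`). It holds on an open set of midpoints, hence on a whole ball by
analytic continuation. On the diagonal `α = β = t` one finds `∇ψ = σ'`, so `B = 0` on the curve and
`∇B · σ'' = -2 |σ''|² < 0` (`StreamAt.bfun`), which gives `∇B ≠ 0` and the signs of `B` on the two
sides.
-/

open Set

open Filter Topology

/-! ### Even parts of analytic functions as analytic functions of `v²` -/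

/-- The endomorphism `u + N` of `ℝ²` with `N = [[0, w / ε], [ε, 0]]`, where `p = (u, w)`.
Since `N² = w`, it stands for `u + √w`, but it depends analytically on `w` and makes sense for
`w < 0`. The scaling `ε` makes its norm small near `p = 0`. -/
noncomputable def sqrtOp (ε : ℝ) (p : ℝ × ℝ) : (ℝ × ℝ) →L[ℝ] (ℝ × ℝ) :=
  p.1 • ContinuousLinearMap.id ℝ (ℝ × ℝ)
    + (p.2 / ε) • (ContinuousLinearMap.inl ℝ ℝ ℝ).comp (ContinuousLinearMap.snd ℝ ℝ ℝ)
    + ε • (ContinuousLinearMap.inr ℝ ℝ ℝ).comp (ContinuousLinearMap.fst ℝ ℝ ℝ)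

lemma sqrtOp_apply (ε : ℝ) (p x : ℝ × ℝ) :
    sqrtOp ε p x = (p.1 * x.1 + p.2 / ε * x.2, p.1 * x.2 + ε * x.1) := by
  ext <;> simp [sqrtOp]

/-- The first conjunct says that the diagonal entry of `(u + N)ⁿ` is the even part in `v` of
`(u + v)ⁿ`; the second one is what the induction needs, multiplied by `v` to allow `v = 0`. -/
lemma sqrtOp_pow {ε : ℝ} (hε : ε ≠ 0) (u v : ℝ) (n : ℕ) :
    ((sqrtOp ε (u, v ^ 2) ^ n) (1, 0)).1 = ((u + v) ^ n + (u - v) ^ n) / 2 ∧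
    v * ((sqrtOp ε (u, v ^ 2) ^ n) (1, 0)).2 = ε * ((u + v) ^ n - (u - v) ^ n) / 2 := by
  induction n with
  | zero => simp
  | succ n ih =>
    obtain ⟨h1, h2⟩ := ih
    rw [pow_succ', mul_apply_eq_comp, sqrtOp_apply]
    refine ⟨?_, ?_⟩
    · have : v ^ 2 / ε * ((sqrtOp ε (u, v ^ 2) ^ n) (1, 0)).2
          = v / ε * (v * ((sqrtOp ε (u, v ^ 2) ^ n) (1, 0)).2) := by ring
      simp only [this, h1, h2]
      field_simp
      ring
    · simp only [mul_add, h1]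
      linear_combination u * h2

lemma norm_sqrtOp_zero_le {ε : ℝ} (hε : 0 < ε) : ‖sqrtOp ε (0, 0)‖ ≤ ε := by
  refine ContinuousLinearMap.opNorm_le_bound _ hε.le fun x => ?_
  rw [sqrtOp_apply]
  simp only [zero_mul, zero_div, zero_add, Prod.norm_mk, norm_zero, norm_mul,
    Real.norm_of_nonneg hε.le]
  refine max_le (by positivity) ?_
  gcongr
  exact norm_fst_le x

/-- The even part in `v` of `f (u + v)` is an analytic function of `(u, v²)`: it is the diagonal
entry of the power series of `f` evaluated at the operator `sqrtOp`. -/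
lemma exists_even_part {f : ℝ → ℝ} {t₀ : ℝ} (hf : AnalyticAt ℝ f t₀) :
    ∃ Φ : ℝ × ℝ → ℝ, AnalyticAt ℝ Φ (t₀, 0) ∧
      ∀ᶠ p : ℝ × ℝ in 𝓝 (t₀, 0), Φ (p.1, p.2 ^ 2) = (f (p.1 + p.2) + f (p.1 - p.2)) / 2 := by
  obtain ⟨p, R, hp⟩ := hf
  obtain ⟨r, hr0, hrR⟩ := ENNReal.lt_iff_exists_nnreal_btwn.1 hp.r_pos
  have hrpos : 0 < r := by exact_mod_cast hr0
  have hrRad := hrR.trans_le hp.r_le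
  obtain ⟨C, hC, hb⟩ := p.norm_mul_pow_le_of_lt_radius hrRad
  let P : FormalMultilinearSeries ℝ ((ℝ × ℝ) →L[ℝ] (ℝ × ℝ)) ((ℝ × ℝ) →L[ℝ] (ℝ × ℝ)) :=
    FormalMultilinearSeries.ofScalars ((ℝ × ℝ) →L[ℝ] (ℝ × ℝ)) p.coeff
  have hPr : (r : ENNReal) ≤ P.radius := by
    refine P.le_radius_of_bound C fun n => ?_
    have : ‖P n‖ = ‖p n‖ := by
      rw [p.norm_apply_eq_norm_coef]
      exact FormalMultilinearSeries.ofScalars_norm _ p.coeff n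
    rw [this]
    exact hb n
  have hP : HasFPowerSeriesOnBall P.sum P 0 P.radius :=
    P.hasFPowerSeriesOnBall (lt_of_lt_of_le (by exact_mod_cast hrpos) hPr)
  set ε : ℝ := r / 2 with hε
  have hε0 : 0 < ε := by positivity
  let N : ℝ × ℝ → ((ℝ × ℝ) →L[ℝ] (ℝ × ℝ)) := fun q => sqrtOp ε (q.1 - t₀, q.2)
  have hNan : AnalyticAt ℝ N (t₀, 0) := by
    have h1 : AnalyticAt ℝ (fun q : ℝ × ℝ => q.1) (t₀, 0) := analyticAt_fst
    have h2 : AnalyticAt ℝ (fun q : ℝ × ℝ => q.2) (t₀, 0) := analyticAt_snd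
    exact (((h1.sub analyticAt_const).smul analyticAt_const).add
      ((h2.div_const).smul analyticAt_const)).add analyticAt_const
  have hball : ∀ᶠ q in 𝓝 ((t₀, 0) : ℝ × ℝ), N q ∈ Metric.eball (0 : ((ℝ × ℝ) →L[ℝ] (ℝ × ℝ))) P.radius := by
    refine hNan.continuousAt.eventually (Metric.isOpen_eball.mem_nhds ?_)
    refine lt_of_lt_of_le ?_ hPr
    simp only [N, sub_self, edist_zero_right]
    rw [← ofReal_norm, ENNReal.ofReal_lt_coe_iff (by positivity)]
    refine (norm_sqrtOp_zero_le hε0).trans_lt ?_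
    rw [hε]; exact half_lt_self (by exact_mod_cast hrpos)
  -- The diagonal entry of an operator.
  let ℓ : ((ℝ × ℝ) →L[ℝ] (ℝ × ℝ)) →L[ℝ] ℝ := (ContinuousLinearMap.fst ℝ ℝ ℝ).comp
    (ContinuousLinearMap.apply ℝ (ℝ × ℝ) ((1, 0) : ℝ × ℝ))
  refine ⟨fun q => ℓ (P.sum (N q)), ?_, ?_⟩
  · exact (ℓ.analyticAt _).comp
      ((hP.analyticAt_of_mem hball.self_of_nhds).comp hNan)
  · have hsq : Tendsto (fun q : ℝ × ℝ => (q.1, q.2 ^ 2)) (𝓝 (t₀, 0)) (𝓝 (t₀, 0)) := by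
      have : Continuous (fun q : ℝ × ℝ => (q.1, q.2 ^ 2)) := by fun_prop
      simpa using this.tendsto ((t₀, 0) : ℝ × ℝ)
    have hR : ∀ᶠ y in 𝓝 (0 : ℝ), y ∈ Metric.eball (0 : ℝ) R :=
      Metric.eball_mem_nhds _ hp.r_pos
    have hplus : ∀ᶠ q : ℝ × ℝ in 𝓝 (t₀, 0), q.1 - t₀ + q.2 ∈ Metric.eball (0 : ℝ) R := by
      have : ContinuousAt (fun q : ℝ × ℝ => q.1 - t₀ + q.2) (t₀, 0) := by fun_prop
      exact this.eventually (by simpa only [sub_self, zero_add, sub_zero] using hR)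
    have hminus : ∀ᶠ q : ℝ × ℝ in 𝓝 (t₀, 0), q.1 - t₀ - q.2 ∈ Metric.eball (0 : ℝ) R := by
      have : ContinuousAt (fun q : ℝ × ℝ => q.1 - t₀ - q.2) (t₀, 0) := by fun_prop
      exact this.eventually (by simpa only [sub_self, zero_add, sub_zero] using hR)
    filter_upwards [hsq.eventually hball, hplus, hminus] with q hq h1 h2
    have e0 := (hP.hasSum hq).mapL ℓ
    have e1 := hp.hasSum h1
    have e2 := hp.hasSum h2
    have e3 := (e1.add e2).div_const 2
    rw [zero_add] at e0
    have : ∀ n, ℓ (P n fun _ => N (q.1, q.2 ^ 2)) =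
        ((p n fun _ => q.1 - t₀ + q.2) + (p n fun _ => q.1 - t₀ - q.2)) / 2 := by
      intro n
      have h := (sqrtOp_pow hε0.ne' (q.1 - t₀) q.2 n).1
      rw [FormalMultilinearSeries.ofScalars_apply_eq]
      rw [FormalMultilinearSeries.apply_eq_pow_smul_coeff,
        FormalMultilinearSeries.apply_eq_pow_smul_coeff, map_smul]
      change p.coeff n * ((sqrtOp ε (q.1 - t₀, q.2 ^ 2) ^ n) (1, 0)).1 = _
      rw [h]
      simp only [smul_eq_mul]
      ring
    rw [funext this] at e0
    have := e0.unique e3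
    rw [this]
    ring_nf

/-! ### The surface in the coordinates `(u, v²)` and the stream function -/

/-- The midpoint `(σ α + σ β) / 2` of two points of the curve. -/
noncomputable def mid (σ : ℝ → ℝ × ℝ) (p : ℝ × ℝ) : ℝ × ℝ := (1 / 2 : ℝ) • (σ p.1 + σ p.2)

lemma mid_self (σ : ℝ → ℝ × ℝ) (t : ℝ) : mid σ (t, t) = σ t := by
  ext <;> simp [mid] <;> ring

/-- The folding of the midpoint map: `mid σ (u + v, u - v)` is even in `v`, hence an analytic map
of `(u, v²)`. -/
lemma exists_square_map {σ : ℝ → ℝ × ℝ} {t₀ : ℝ} (hσ : AnalyticAt ℝ σ t₀) :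
    ∃ P : ℝ × ℝ → ℝ × ℝ, AnalyticAt ℝ P (t₀, 0) ∧
      ∀ᶠ p : ℝ × ℝ in 𝓝 (t₀, 0), P (p.1, p.2 ^ 2) = mid σ (p.1 + p.2, p.1 - p.2) := by
  obtain ⟨Φ₁, h1, e1⟩ := exists_even_part (f := fun t => (σ t).1) (analyticAt_fst.comp hσ)
  obtain ⟨Φ₂, h2, e2⟩ := exists_even_part (f := fun t => (σ t).2) (analyticAt_snd.comp hσ)
  refine ⟨fun p => (Φ₁ p, Φ₂ p), h1.prod h2, ?_⟩
  filter_upwards [e1, e2] with p e1 e2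
  ext
  · simp [mid, e1]; ring
  · simp [mid, e2]; ring

/-- The differential at `(t₀, 0)` has columns `σ'` and `σ'' / 2`; it is the passage to `v²` that
makes it invertible. -/
lemma square_map_fderiv {σ : ℝ → ℝ × ℝ} {t₀ : ℝ} (hσ : AnalyticAt ℝ σ t₀)
    {P : ℝ × ℝ → ℝ × ℝ} (hP : AnalyticAt ℝ P (t₀, 0))
    (hPm : ∀ᶠ p : ℝ × ℝ in 𝓝 (t₀, 0), P (p.1, p.2 ^ 2) = mid σ (p.1 + p.2, p.1 - p.2)) :
    fderiv ℝ P (t₀, 0) (1, 0) = deriv σ t₀ ∧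
    fderiv ℝ P (t₀, 0) (0, 1) = (1 / 2 : ℝ) • deriv (deriv σ) t₀ := by
  constructor
  · have hc : HasDerivAt (fun u : ℝ => ((u, 0) : ℝ × ℝ)) (1, 0) t₀ :=
      (hasDerivAt_id t₀).prodMk (hasDerivAt_const _ _)
    have h1 : HasDerivAt (fun u : ℝ => P (u, 0)) (fderiv ℝ P (t₀, 0) (1, 0)) t₀ :=
      (hP.differentiableAt.hasFDerivAt).comp_hasDerivAt t₀ hc
    have h2 : (fun u : ℝ => P (u, 0)) =ᶠ[𝓝 t₀] σ := by
      have := (hc.continuousAt.tendsto).eventually hPm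
      filter_upwards [this] with u hu
      simpa [mid_self] using hu
    exact (h1.congr_of_eventuallyEq h2.symm).unique hσ.differentiableAt.hasDerivAt
  · -- Differentiating `P (t₀, v²) = mid σ (t₀ + v, t₀ - v)` twice at `v = 0`.
    have hcont : ContinuousAt (fun v : ℝ => ((t₀, v ^ 2) : ℝ × ℝ)) 0 := by fun_prop
    have hPan : ∀ᶠ v : ℝ in 𝓝 0, AnalyticAt ℝ P (t₀, v ^ 2) := by
      refine hcont.eventually ?_
      simpa using hP.eventually_analyticAt
    have hcont' : ContinuousAt (fun v : ℝ => ((t₀, v) : ℝ × ℝ)) 0 := by fun_prop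
    have hm := (hcont'.tendsto.eventually hPm).eventually_nhds
    have hp : ContinuousAt (fun v : ℝ => t₀ + v) 0 := by fun_prop
    have hn : ContinuousAt (fun v : ℝ => t₀ - v) 0 := by fun_prop
    have hσp : ∀ᶠ v : ℝ in 𝓝 0, AnalyticAt ℝ σ (t₀ + v) :=
      hp.eventually (by simpa using hσ.eventually_analyticAt)
    have hσn : ∀ᶠ v : ℝ in 𝓝 0, AnalyticAt ℝ σ (t₀ - v) :=
      hn.eventually (by simpa using hσ.eventually_analyticAt)
    have hfirst : ∀ᶠ v : ℝ in 𝓝 0,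
        (2 * v) • fderiv ℝ P (t₀, v ^ 2) (0, 1)
          = (1 / 2 : ℝ) • (deriv σ (t₀ + v) - deriv σ (t₀ - v)) := by
      filter_upwards [hPan, hm, hσp, hσn] with v h1 h2 h3 h4
      have hc : HasDerivAt (fun v : ℝ => ((t₀, v ^ 2) : ℝ × ℝ)) (0, 2 * v) v := by
        simpa using (hasDerivAt_const v t₀).prodMk (hasDerivAt_pow 2 v)
      have d1 := (h1.differentiableAt.hasFDerivAt).comp_hasDerivAt v hc
      have d3 : HasDerivAt (fun v => σ (t₀ + v)) (deriv σ (t₀ + v)) v :=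
        h3.differentiableAt.hasDerivAt.comp_const_add t₀ v
      have d4 : HasDerivAt (fun v => σ (t₀ - v)) (-deriv σ (t₀ - v)) v :=
        h4.differentiableAt.hasDerivAt.comp_const_sub t₀ v
      have d5 := (d3.add d4).const_smul (1 / 2 : ℝ)
      have := d1.unique (d5.congr_of_eventuallyEq h2)
      rw [← sub_eq_add_neg] at this
      rw [← this, ← map_smul]
      simp
    have hG : DifferentiableAt ℝ (fun v : ℝ => fderiv ℝ P (t₀, v ^ 2) (0, 1)) 0 := by
      have h0 : AnalyticAt ℝ (fderiv ℝ P) (t₀, (0 : ℝ) ^ 2) := by simpa using hP.fderiv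
      have hc : DifferentiableAt ℝ (fun v : ℝ => ((t₀, v ^ 2) : ℝ × ℝ)) 0 := by fun_prop
      have := DifferentiableAt.comp (0 : ℝ) h0.differentiableAt hc
      exact this.clm_apply (differentiableAt_const _)
    have d1 := ((hasDerivAt_id (0 : ℝ)).const_mul 2).smul hG.hasDerivAt
    have hσ' : HasDerivAt (deriv σ) (deriv (deriv σ) t₀) t₀ :=
      hσ.deriv.differentiableAt.hasDerivAt
    have d3 : HasDerivAt (fun v => deriv σ (t₀ + v)) (deriv (deriv σ) t₀) 0 :=
      HasDerivAt.comp_const_add t₀ 0 (by simpa using hσ')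
    have d4 : HasDerivAt (fun v => deriv σ (t₀ - v)) (-deriv (deriv σ) t₀) 0 :=
      HasDerivAt.comp_const_sub t₀ 0 (by simpa using hσ')
    have d5 := (d3.sub d4).const_smul (1 / 2 : ℝ)
    have := (d1.congr_of_eventuallyEq (EventuallyEq.symm hfirst)).unique d5
    simp only [id, mul_zero, zero_smul, zero_add, mul_one, ne_eq, OfNat.ofNat_ne_zero,
      not_false_eq_true, zero_pow] at this
    have h2 : (2 : ℝ) • fderiv ℝ P (t₀, 0) (0, 1) = deriv (deriv σ) t₀ := by
      rw [this, sub_neg_eq_add, ← two_smul ℝ, smul_smul]; norm_num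
    rw [← h2, smul_smul]; norm_num

/-- Existence of the stream function: `ψ ((σ α + σ β) / 2) = (α + β) / 2`, and the midpoints of
pairs of distinct curve points near `σ t₀` fill open sets arbitrarily close to `σ t₀`. -/
lemma exists_stream {σ : ℝ → ℝ × ℝ} {t₀ : ℝ} (hσ : AnalyticAt ℝ σ t₀)
    (hdet : (deriv σ t₀).1 * (deriv (deriv σ) t₀).2
      - (deriv σ t₀).2 * (deriv (deriv σ) t₀).1 ≠ 0) :
    ∃ ψ : ℝ × ℝ → ℝ, AnalyticAt ℝ ψ (σ t₀) ∧
      (∀ᶠ p : ℝ × ℝ in 𝓝 (t₀, t₀), ψ (mid σ p) = (p.1 + p.2) / 2) ∧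
      ∀ S ∈ 𝓝 ((t₀, t₀) : ℝ × ℝ), ∀ V ∈ 𝓝 (σ t₀), ∃ q₀ ∈ V, ∀ᶠ q in 𝓝 q₀,
        ∃ p ∈ S, p.1 ≠ p.2 ∧ q = mid σ p := by
  obtain ⟨P, hP, hPm⟩ := exists_square_map hσ
  obtain ⟨hu, hw⟩ := square_map_fderiv hσ hP hPm
  have hP0 : P (t₀, 0) = σ t₀ := by simpa [mid_self] using hPm.self_of_nhds
  have hinj : Function.Injective (fderiv ℝ P (t₀, 0)).toLinearMap := by
    rw [injective_iff_map_eq_zero]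
    rintro ⟨x, y⟩ hxy
    have hsplit : ((x, y) : ℝ × ℝ) = x • (1, 0) + y • (0, 1) := by simp
    have h : x • deriv σ t₀ + y • ((1 / 2 : ℝ) • deriv (deriv σ) t₀) = 0 := by
      rw [← hu, ← hw, ← map_smul, ← map_smul, ← map_add, ← hsplit]; exact hxy
    have h1 := congrArg Prod.fst h
    have h2 := congrArg Prod.snd h
    simp only [Prod.fst_add, Prod.snd_add, Prod.smul_fst, Prod.smul_snd, smul_eq_mul,
      Prod.fst_zero, Prod.snd_zero] at h1 h2
    have hx : x = 0 := by
      apply (mul_eq_zero.1 _).resolve_right hdet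
      linear_combination (deriv (deriv σ) t₀).2 * h1 - (deriv (deriv σ) t₀).1 * h2
    have hy : y = 0 := by
      apply (mul_eq_zero.1 _).resolve_right hdet
      linear_combination 2 * (deriv σ t₀).1 * h2 - 2 * (deriv σ t₀).2 * h1
    simp [hx, hy]
  let i : (ℝ × ℝ) ≃L[ℝ] (ℝ × ℝ) :=
    (LinearEquiv.ofInjectiveEndo _ hinj).toContinuousLinearEquiv
  have hi : (i : (ℝ × ℝ) →L[ℝ] (ℝ × ℝ)) = fderiv ℝ P (t₀, 0) := by
    ext1 <;> rfl
  have hstrict : HasStrictFDerivAt P (i : (ℝ × ℝ) →L[ℝ] (ℝ × ℝ)) (t₀, 0) := by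
    rw [hi]; exact hP.hasStrictFDerivAt
  let e := hstrict.toOpenPartialHomeomorph P
  have hsrc : (t₀, 0) ∈ e.source := hstrict.mem_toOpenPartialHomeomorph_source
  have heP : ∀ x, e x = P x := fun x => rfl
  have hsymm : AnalyticAt ℝ e.symm (σ t₀) := by
    rw [← hP0]
    exact e.analyticAt_symm' (i := i) hsrc hP hi.symm
  have hsrc' : ∀ᶠ x in 𝓝 ((t₀, 0) : ℝ × ℝ), x ∈ e.source := e.open_source.mem_nhds hsrc
  refine ⟨fun q => (e.symm q).1, analyticAt_fst.comp hsymm, ?_, ?_⟩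
  · have hc : ContinuousAt (fun p : ℝ × ℝ => ((p.1 + p.2) / 2, (p.1 - p.2) / 2)) (t₀, t₀) := by
      fun_prop
    have hc2 : ContinuousAt (fun p : ℝ × ℝ => ((p.1 + p.2) / 2, ((p.1 - p.2) / 2) ^ 2))
        (t₀, t₀) := by fun_prop
    have E1 := hc.eventually (by simpa using hPm)
    have E2 := hc2.eventually (p := fun x => x ∈ e.source) (by simpa using hsrc')
    filter_upwards [E1, E2] with p h1 h2
    have h3 : mid σ p = e ((p.1 + p.2) / 2, ((p.1 - p.2) / 2) ^ 2) := by
      rw [heP, h1]; congr 1; ext <;> simp <;> ring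
    simp only [h3, e.left_inv h2]
  · intro S hS V hV
    have hc : ContinuousAt (fun x : ℝ × ℝ => (x.1, √x.2)) (t₀, 0) := by fun_prop
    have hc2 : ContinuousAt (fun x : ℝ × ℝ => (x.1 + √x.2, x.1 - √x.2)) (t₀, 0) := by fun_prop
    have E1 := hc.eventually (by simpa using hPm)
    have E2 := hc2.eventually (p := fun p => p ∈ S) (by simpa using hS)
    have E3 := hP.continuousAt.eventually (p := fun q => q ∈ V) (by simpa [hP0] using hV)
    have hcw : Tendsto (fun w : ℝ => ((t₀, w) : ℝ × ℝ)) (𝓝[>] 0) (𝓝 (t₀, 0)) := by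
      have : ContinuousAt (fun w : ℝ => ((t₀, w) : ℝ × ℝ)) 0 := by fun_prop
      exact this.tendsto.mono_left nhdsWithin_le_nhds
    obtain ⟨w, hw0, h1, h3, h4⟩ := ((eventually_mem_nhdsWithin).and
      (hcw.eventually ((E1.and E2).eventually_nhds.and (E3.and hsrc')))).exists
    have hpos : ∀ᶠ x in 𝓝 ((t₀, w) : ℝ × ℝ), 0 < x.2 :=
      (continuous_snd.continuousAt).eventually (lt_mem_nhds hw0)
    refine ⟨P (t₀, w), h3, ?_⟩
    have htgt : P (t₀, w) ∈ e.target := e.map_source h4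
    have hback : Tendsto e.symm (𝓝 (P (t₀, w))) (𝓝 (t₀, w)) := by
      have := (e.continuousAt_symm htgt).tendsto
      rwa [show e.symm (P (t₀, w)) = (t₀, w) from e.left_inv h4] at this
    filter_upwards [hback.eventually h1, hback.eventually hpos, e.open_target.mem_nhds htgt]
      with q ⟨ha, hb⟩ hc hd
    refine ⟨_, hb, ?_, ?_⟩
    · have := Real.sqrt_pos.2 hc
      intro h
      simp only at h
      linarith
    · rw [← ha]
      simp only [Real.sq_sqrt hc.le]
      exact (e.right_inv hd).symm

/-! ### First and second derivatives of the stream function -/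

/-- `ψ` sends midpoints near `mid σ p` to parameter midpoints, all data being analytic there. -/
structure StreamAt (σ : ℝ → ℝ × ℝ) (ψ : ℝ × ℝ → ℝ) (p : ℝ × ℝ) : Prop where
  an_fst : AnalyticAt ℝ σ p.1
  an_snd : AnalyticAt ℝ σ p.2
  an_psi : AnalyticAt ℝ ψ (mid σ p)
  mid_eq : ∀ᶠ p' in 𝓝 p, ψ (mid σ p') = (p'.1 + p'.2) / 2

lemma continuousAt_mid {σ : ℝ → ℝ × ℝ} {p : ℝ × ℝ} (h1 : AnalyticAt ℝ σ p.1)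
    (h2 : AnalyticAt ℝ σ p.2) : ContinuousAt (mid σ) p :=
  ((ContinuousAt.comp h1.continuousAt continuousAt_fst).add
    (ContinuousAt.comp h2.continuousAt continuousAt_snd)).const_smul (1 / 2 : ℝ)

lemma StreamAt.eventually {σ : ℝ → ℝ × ℝ} {ψ : ℝ × ℝ → ℝ} {p : ℝ × ℝ} (h : StreamAt σ ψ p) :
    ∀ᶠ p' in 𝓝 p, StreamAt σ ψ p' := by
  filter_upwards [continuousAt_fst.eventually h.an_fst.eventually_analyticAt,
    continuousAt_snd.eventually h.an_snd.eventually_analyticAt,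
    (continuousAt_mid h.an_fst h.an_snd).eventually h.an_psi.eventually_analyticAt,
    h.mid_eq.eventually_nhds] with p' a b c d
  exact ⟨a, b, c, d⟩

lemma hasDerivAt_mid_fst {σ : ℝ → ℝ × ℝ} {α : ℝ} (β : ℝ) (h : AnalyticAt ℝ σ α) :
    HasDerivAt (fun x => mid σ (x, β)) ((1 / 2 : ℝ) • deriv σ α) α :=
  (h.differentiableAt.hasDerivAt.add_const (σ β)).const_smul (1 / 2 : ℝ)

lemma hasDerivAt_mid_snd {σ : ℝ → ℝ × ℝ} {β : ℝ} (α : ℝ) (h : AnalyticAt ℝ σ β) :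
    HasDerivAt (fun x => mid σ (α, x)) ((1 / 2 : ℝ) • deriv σ β) β :=
  (h.differentiableAt.hasDerivAt.const_add (σ α)).const_smul (1 / 2 : ℝ)

lemma StreamAt.swap {σ : ℝ → ℝ × ℝ} {ψ : ℝ × ℝ → ℝ} {α β : ℝ} (h : StreamAt σ ψ (α, β)) :
    StreamAt σ ψ (β, α) := by
  have hm : ∀ x y, mid σ (x, y) = mid σ (y, x) := fun x y => by simp [mid, add_comm]
  refine ⟨h.an_snd, h.an_fst, by rw [hm]; exact h.an_psi, ?_⟩
  have hc : Tendsto (fun p : ℝ × ℝ => (p.2, p.1)) (𝓝 (β, α)) (𝓝 (α, β)) :=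
    (continuous_swap.tendsto (β, α))
  filter_upwards [hc.eventually h.mid_eq] with p hp
  rw [show p = (p.1, p.2) from rfl, hm, hp, add_comm]

lemma StreamAt.fderiv_fst {σ : ℝ → ℝ × ℝ} {ψ : ℝ × ℝ → ℝ} {α β : ℝ} (h : StreamAt σ ψ (α, β)) :
    fderiv ℝ ψ (mid σ (α, β)) (deriv σ α) = 1 := by
  have d1 := (h.an_psi.differentiableAt.hasFDerivAt).comp_hasDerivAt α
    (hasDerivAt_mid_fst β h.an_fst)
  have d2 : HasDerivAt (fun x : ℝ => (x + β) / 2) (1 / 2) α :=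
    ((hasDerivAt_id α).add_const β).div_const 2
  have hc : ContinuousAt (fun x : ℝ => (x, β)) α := by fun_prop
  have e := d1.unique (d2.congr_of_eventuallyEq (hc.eventually h.mid_eq))
  rw [map_smul, smul_eq_mul] at e
  linarith

lemma StreamAt.fderiv_snd {σ : ℝ → ℝ × ℝ} {ψ : ℝ × ℝ → ℝ} {α β : ℝ} (h : StreamAt σ ψ (α, β)) :
    fderiv ℝ ψ (mid σ (α, β)) (deriv σ β) = 1 := by
  have hm : mid σ (α, β) = mid σ (β, α) := by simp [mid, add_comm]
  rw [hm]
  exact h.swap.fderiv_fst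

/-- The wave equation `∂²ψ/∂α∂β = 0` in null coordinates, read as conjugacy of the two null
directions with respect to the Hessian of `ψ`. -/
lemma StreamAt.hessian {σ : ℝ → ℝ × ℝ} {ψ : ℝ × ℝ → ℝ} {α β : ℝ} (h : StreamAt σ ψ (α, β)) :
    fderiv ℝ (fderiv ℝ ψ) (mid σ (α, β)) (deriv σ β) (deriv σ α) = 0 := by
  have d0 : HasDerivAt (fun x => fderiv ℝ ψ (mid σ (α, x)))
      (fderiv ℝ (fderiv ℝ ψ) (mid σ (α, β)) ((1 / 2 : ℝ) • deriv σ β)) β :=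
    (h.an_psi.fderiv.differentiableAt.hasFDerivAt).comp_hasDerivAt β
      (hasDerivAt_mid_snd α h.an_snd)
  have d1 := d0.clm_apply (hasDerivAt_const β (deriv σ α))
  have hc : ContinuousAt (fun x : ℝ => (α, x)) β := by fun_prop
  have hev : (fun x => fderiv ℝ ψ (mid σ (α, x)) (deriv σ α)) =ᶠ[𝓝 β] fun _ => (1 : ℝ) := by
    filter_upwards [hc.eventually h.eventually] with x hx using hx.fderiv_fst
  have e := d1.unique ((hasDerivAt_const β (1 : ℝ)).congr_of_eventuallyEq hev)
  simp only [map_smul, smul_apply, smul_eq_mul, map_zero, add_zero] at e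
  linarith

/-- Differentiating `dψ (σ' α) = 1` in `α` on the diagonal gives a Hessian term, which vanishes by
`StreamAt.hessian`, plus `dψ (σ'')`. -/
lemma StreamAt.fderiv_accel {σ : ℝ → ℝ × ℝ} {ψ : ℝ × ℝ → ℝ} {t : ℝ} (h : StreamAt σ ψ (t, t)) :
    fderiv ℝ ψ (σ t) (deriv (deriv σ) t) = 0 := by
  have d0 : HasDerivAt (fun x => fderiv ℝ ψ (mid σ (x, t)))
      (fderiv ℝ (fderiv ℝ ψ) (mid σ (t, t)) ((1 / 2 : ℝ) • deriv σ t)) t :=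
    (h.an_psi.fderiv.differentiableAt.hasFDerivAt).comp_hasDerivAt t
      (hasDerivAt_mid_fst t h.an_fst)
  have d1 := d0.clm_apply h.an_fst.deriv.differentiableAt.hasDerivAt
  have hc : ContinuousAt (fun x : ℝ => (x, t)) t := by fun_prop
  have hev : (fun x => fderiv ℝ ψ (mid σ (x, t)) (deriv σ x)) =ᶠ[𝓝 t] fun _ => (1 : ℝ) := by
    filter_upwards [hc.eventually h.eventually] with x hx using hx.fderiv_fst
  have e := d1.unique ((hasDerivAt_const t (1 : ℝ)).congr_of_eventuallyEq hev)
  have h0 := h.hessian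
  simp only [map_smul, smul_apply, smul_eq_mul, h0, mul_zero, zero_add] at e
  rwa [mid_self] at e

lemma clm_apply_eq {E : Type*} [NormedAddCommGroup E] [NormedSpace ℝ E]
    (L : ℝ × ℝ →L[ℝ] E) (x : ℝ × ℝ) : L x = x.1 • L (1, 0) + x.2 • L (0, 1) := by
  rw [← map_smul, ← map_smul, ← map_add]
  simp

lemma hasFDerivAt_pd1 {ψ : ℝ × ℝ → ℝ} {q : ℝ × ℝ} (h : AnalyticAt ℝ ψ q) :
    HasFDerivAt (pd1 ψ) ((fderiv ℝ (fderiv ℝ ψ) q).flip (1, 0)) q := by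
  have := (h.fderiv.differentiableAt.hasFDerivAt).clm_apply
    (hasFDerivAt_const ((1, 0) : ℝ × ℝ) q)
  rw [ContinuousLinearMap.comp_zero, zero_add] at this
  exact this

lemma hasFDerivAt_pd2 {ψ : ℝ × ℝ → ℝ} {q : ℝ × ℝ} (h : AnalyticAt ℝ ψ q) :
    HasFDerivAt (pd2 ψ) ((fderiv ℝ (fderiv ℝ ψ) q).flip (0, 1)) q := by
  have := (h.fderiv.differentiableAt.hasFDerivAt).clm_apply
    (hasFDerivAt_const ((0, 1) : ℝ × ℝ) q)
  rw [ContinuousLinearMap.comp_zero, zero_add] at this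
  exact this

lemma analyticAt_pd1 {ψ : ℝ × ℝ → ℝ} {q : ℝ × ℝ} (h : AnalyticAt ℝ ψ q) :
    AnalyticAt ℝ (pd1 ψ) q :=
  ((ContinuousLinearMap.apply ℝ ℝ ((1, 0) : ℝ × ℝ)).analyticAt _).comp h.fderiv

lemma analyticAt_pd2 {ψ : ℝ × ℝ → ℝ} {q : ℝ × ℝ} (h : AnalyticAt ℝ ψ q) :
    AnalyticAt ℝ (pd2 ψ) q :=
  ((ContinuousLinearMap.apply ℝ ℝ ((0, 1) : ℝ × ℝ)).analyticAt _).comp h.fderiv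

lemma hessian_symm {ψ : ℝ × ℝ → ℝ} {q : ℝ × ℝ} (h : AnalyticAt ℝ ψ q) (x y : ℝ × ℝ) :
    fderiv ℝ (fderiv ℝ ψ) q x y = fderiv ℝ (fderiv ℝ ψ) q y x :=
  (ContDiffAt.isSymmSndFDerivAt_of_omega h.contDiffAt).eq x y

/-! ### The zero mean curvature equation -/

/-- Two distinct unit vectors `a`, `b` on the line `⟨(p, q), ·⟩ = 1` satisfy
`(a₁b₁, a₁b₂ + a₂b₁, a₂b₂) ∝ (1 - q², 2pq, 1 - p²)`, so conjugacy of `a` and `b` under the symmetric form `(r, s, t)`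
is the zero mean curvature equation. -/
lemma zmc_algebra {p q r s t a₁ a₂ b₁ b₂ : ℝ} (ha : a₁ ^ 2 + a₂ ^ 2 = 1)
    (hb : b₁ ^ 2 + b₂ ^ 2 = 1) (hne : ¬ (a₁ = b₁ ∧ a₂ = b₂))
    (hpa : a₁ * p + a₂ * q = 1) (hpb : b₁ * p + b₂ * q = 1)
    (hH : a₁ * b₁ * r + (a₁ * b₂ + a₂ * b₁) * s + a₂ * b₂ * t = 0) :
    (1 - q ^ 2) * r + 2 * p * q * s + (1 - p ^ 2) * t = 0 := by
  set D := a₁ * b₂ - a₂ * b₁ with hD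
  have hDp : D * p = b₂ - a₂ := by rw [hD]; linear_combination b₂ * hpa - a₂ * hpb
  have hDq : D * q = a₁ - b₁ := by rw [hD]; linear_combination a₁ * hpb - b₁ * hpa
  have hD0 : D ≠ 0 := by
    intro h0
    apply hne
    rw [h0] at hDp hDq
    constructor <;> linarith
  have k1 : D ^ 2 - (a₁ - b₁) ^ 2 = (2 - 2 * (a₁ * b₁ + a₂ * b₂)) * (a₁ * b₁) := by
    linear_combination (b₁ ^ 2 + b₂ ^ 2 - (1 - b₁ ^ 2)) * ha + (1 - a₂ ^ 2) * hb
  have k2 : D ^ 2 - (b₂ - a₂) ^ 2 = (2 - 2 * (a₁ * b₁ + a₂ * b₂)) * (a₂ * b₂) := by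
    linear_combination (b₁ ^ 2 + b₂ ^ 2 - (1 - b₂ ^ 2)) * ha + (1 - a₁ ^ 2) * hb
  have k3 : 2 * (b₂ - a₂) * (a₁ - b₁)
      = (2 - 2 * (a₁ * b₁ + a₂ * b₂)) * (a₁ * b₂ + a₂ * b₁) := by
    linear_combination 2 * b₁ * b₂ * ha + 2 * a₁ * a₂ * hb
  have : D ^ 2 * ((1 - q ^ 2) * r + 2 * p * q * s + (1 - p ^ 2) * t) = 0 := by
    have e : D ^ 2 * ((1 - q ^ 2) * r + 2 * p * q * s + (1 - p ^ 2) * t)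
      = (D ^ 2 - (D * q) ^ 2) * r + 2 * (D * p) * (D * q) * s + (D ^ 2 - (D * p) ^ 2) * t := by
      ring
    rw [e, hDp, hDq, k1, k2, k3]
    linear_combination (2 - 2 * (a₁ * b₁ + a₂ * b₂)) * hH
  exact (mul_eq_zero.1 this).resolve_left (pow_ne_zero 2 hD0)

lemma StreamAt.zmc {σ : ℝ → ℝ × ℝ} {ψ : ℝ × ℝ → ℝ} {α β : ℝ} (h : StreamAt σ ψ (α, β))
    (hα : (deriv σ α).1 ^ 2 + (deriv σ α).2 ^ 2 = 1)
    (hβ : (deriv σ β).1 ^ 2 + (deriv σ β).2 ^ 2 = 1) (hne : deriv σ α ≠ deriv σ β) :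
    ZMCAt ψ (mid σ (α, β)) := by
  have h1 := h.fderiv_fst
  have h2 := h.fderiv_snd
  have hH := h.hessian
  have hs := hessian_symm h.an_psi (1, 0) (0, 1)
  rw [clm_apply_eq, smul_eq_mul, smul_eq_mul] at h1 h2
  rw [clm_apply_eq (fderiv ℝ (fderiv ℝ ψ) (mid σ (α, β)))] at hH
  simp only [add_apply, smul_apply, smul_eq_mul] at hH
  rw [clm_apply_eq (fderiv ℝ (fderiv ℝ ψ) (mid σ (α, β)) (1, 0)),
    clm_apply_eq (fderiv ℝ (fderiv ℝ ψ) (mid σ (α, β)) (0, 1)), hs] at hH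
  simp only [smul_eq_mul] at hH
  unfold ZMCAt
  have e1 : pd1 (pd1 ψ) (mid σ (α, β)) = fderiv ℝ (fderiv ℝ ψ) (mid σ (α, β)) (1, 0) (1, 0) := by
    rw [pd1, (hasFDerivAt_pd1 h.an_psi).fderiv]; rfl
  have e2 : pd2 (pd1 ψ) (mid σ (α, β)) = fderiv ℝ (fderiv ℝ ψ) (mid σ (α, β)) (0, 1) (1, 0) := by
    rw [pd2, (hasFDerivAt_pd1 h.an_psi).fderiv]; rfl
  have e3 : pd2 (pd2 ψ) (mid σ (α, β)) = fderiv ℝ (fderiv ℝ ψ) (mid σ (α, β)) (0, 1) (0, 1) := by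
    rw [pd2, (hasFDerivAt_pd2 h.an_psi).fderiv]; rfl
  rw [e1, e2, e3]
  refine zmc_algebra hα hβ (fun h => hne (Prod.ext h.1 h.2)) h1 h2 ?_
  linear_combination hH

/-! ### Behaviour of `B` along the curve -/

lemma inner_deriv_eq_zero {σ : ℝ → ℝ × ℝ} {t : ℝ} (hσ : AnalyticAt ℝ σ t)
    (hu : ∀ᶠ t in 𝓝 t, (deriv σ t).1 ^ 2 + (deriv σ t).2 ^ 2 = 1) :
    (deriv σ t).1 * (deriv (deriv σ) t).1 + (deriv σ t).2 * (deriv (deriv σ) t).2 = 0 := by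
  have d := hσ.deriv.differentiableAt.hasDerivAt
  have d1 : HasDerivAt (fun t => (deriv σ t).1) (deriv (deriv σ) t).1 t := d.fst
  have d2 : HasDerivAt (fun t => (deriv σ t).2) (deriv (deriv σ) t).2 t := d.snd
  have := ((d1.pow 2).add (d2.pow 2)).unique
    ((hasDerivAt_const t (1 : ℝ)).congr_of_eventuallyEq hu)
  simp at this
  linarith

lemma det_ne_zero_of_frame {T N : ℝ × ℝ} (hT : T.1 ^ 2 + T.2 ^ 2 = 1)
    (hTN : T.1 * N.1 + T.2 * N.2 = 0) (hN : N ≠ 0) : T.1 * N.2 - T.2 * N.1 ≠ 0 := by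
  intro h
  apply hN
  ext
  · simp only [Prod.fst_zero]
    linear_combination (-N.1) * hT + T.1 * hTN - T.2 * h
  · simp only [Prod.snd_zero]
    linear_combination (-N.2) * hT + T.2 * hTN + T.1 * h

/-- On the curve the gradient of `ψ` is the unit tangent. -/
lemma StreamAt.grad {σ : ℝ → ℝ × ℝ} {ψ : ℝ × ℝ → ℝ} {t : ℝ} (h : StreamAt σ ψ (t, t))
    (hu : ∀ᶠ t in 𝓝 t, (deriv σ t).1 ^ 2 + (deriv σ t).2 ^ 2 = 1)
    (hne : deriv (deriv σ) t ≠ 0) :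
    pd1 ψ (σ t) = (deriv σ t).1 ∧ pd2 ψ (σ t) = (deriv σ t).2 := by
  have h1 := h.fderiv_fst
  have h2 := h.fderiv_accel
  have h3 := inner_deriv_eq_zero h.an_fst hu
  have hT := hu.self_of_nhds
  have hdet := det_ne_zero_of_frame hT h3 hne
  rw [mid_self] at h1
  rw [clm_apply_eq, smul_eq_mul, smul_eq_mul] at h1 h2
  change _ * pd1 ψ (σ t) + _ * pd2 ψ (σ t) = _ at h1 h2
  set T := deriv σ t
  set N := deriv (deriv σ) t
  constructor
  · apply mul_left_cancel₀ hdet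
    linear_combination N.2 * h1 - T.2 * h2 - N.2 * hT + T.2 * h3
  · apply mul_left_cancel₀ hdet
    linear_combination T.1 * h2 - N.1 * h1 + N.1 * hT - T.1 * h3

/-- `B` vanishes on the curve because `∇ψ = σ'` there. Differentiating `∇ψ (σ t) = σ' t` gives
`Hess ψ (σ') = σ''`, whence `∇B · σ'' = -2 Hess ψ (σ', σ'') = -2 |σ''|² < 0`. -/
lemma StreamAt.bfun {σ : ℝ → ℝ × ℝ} {ψ : ℝ × ℝ → ℝ} {t : ℝ} (h : StreamAt σ ψ (t, t))
    (hu : ∀ᶠ t in 𝓝 t, (deriv σ t).1 ^ 2 + (deriv σ t).2 ^ 2 = 1)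
    (hne : ∀ᶠ t in 𝓝 t, deriv (deriv σ) t ≠ 0) :
    Bfun ψ (σ t) = 0 ∧ DifferentiableAt ℝ (Bfun ψ) (σ t) ∧
      fderiv ℝ (Bfun ψ) (σ t) (deriv (deriv σ) t) < 0 := by
  have hψ : AnalyticAt ℝ ψ (σ t) := by simpa only [mid_self] using h.an_psi
  obtain ⟨g1, g2⟩ := h.grad hu hne.self_of_nhds
  have hc : ContinuousAt (fun x : ℝ => (x, x)) t := by fun_prop
  have hev : ∀ᶠ x in 𝓝 t, pd1 ψ (σ x) = (deriv σ x).1 ∧ pd2 ψ (σ x) = (deriv σ x).2 := by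
    filter_upwards [hc.eventually h.eventually, hu.eventually_nhds, hne] with x a b c
      using a.grad b c
  have hσd := h.an_fst.differentiableAt.hasDerivAt
  have hσd2 := h.an_fst.deriv.differentiableAt.hasDerivAt
  have s1 := ((hasFDerivAt_pd1 hψ).comp_hasDerivAt t hσd).unique
    (HasDerivAt.congr_of_eventuallyEq hσd2.fst (hev.mono fun x hx => hx.1))
  have s2 := ((hasFDerivAt_pd2 hψ).comp_hasDerivAt t hσd).unique
    (HasDerivAt.congr_of_eventuallyEq hσd2.snd (hev.mono fun x hx => hx.2))
  rw [ContinuousLinearMap.flip_apply] at s1 s2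
  have hB : HasFDerivAt (Bfun ψ) _ (σ t) :=
    ((hasFDerivAt_const (1 : ℝ) (σ t)).sub ((hasFDerivAt_pd1 hψ).pow 2)).sub
      ((hasFDerivAt_pd2 hψ).pow 2)
  refine ⟨?_, hB.differentiableAt, ?_⟩
  · rw [Bfun, g1, g2]; linarith [hu.self_of_nhds]
  · rw [hB.fderiv]
    have hs := hessian_symm hψ (deriv σ t) (deriv (deriv σ) t)
    rw [clm_apply_eq _ (deriv (deriv σ) t), s1, s2, clm_apply_eq _ (deriv σ t)] at hs
    simp only [smul_eq_mul] at hs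
    have hpos : 0 < (deriv (deriv σ) t).1 ^ 2 + (deriv (deriv σ) t).2 ^ 2 := by
      have hn := hne.self_of_nhds
      by_contra hle
      apply hn
      have h1 := sq_nonneg (deriv (deriv σ) t).1
      have h2 := sq_nonneg (deriv (deriv σ) t).2
      ext
      · exact pow_eq_zero_iff (two_ne_zero) |>.1 (by linarith)
      · exact pow_eq_zero_iff (two_ne_zero) |>.1 (by linarith)
    simp [g1, g2]
    nlinarith [hs, hpos]

lemma eventually_ne_of_hasStrictDerivAt {f : ℝ → ℝ × ℝ} {N : ℝ × ℝ} {t : ℝ}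
    (hf : HasStrictDerivAt f N t) (hN : N ≠ 0) :
    ∀ᶠ p : ℝ × ℝ in 𝓝 (t, t), p.1 ≠ p.2 → f p.1 ≠ f p.2 := by
  have hN' : 0 < ‖N‖ := norm_pos_iff.2 hN
  filter_upwards [hf.hasStrictFDerivAt.isLittleO.def (half_pos hN')] with p hp hne heq
  have h1 : 0 < ‖p.1 - p.2‖ := norm_pos_iff.2 (sub_ne_zero.2 hne)
  simp only [heq, sub_self, zero_sub, norm_neg, ContinuousLinearMap.toSpanSingleton_apply,
    norm_smul] at hp
  nlinarith [mul_pos h1 hN']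

lemma sign_of_deriv_neg {g : ℝ → ℝ} {c : ℝ} (hg : HasDerivAt g c 0) (h0 : g 0 = 0) (hc : c < 0) :
    ∀ᶠ s in 𝓝 (0 : ℝ), (0 < s → g s < 0) ∧ (s < 0 → 0 < g s) := by
  have h := (hasDerivAt_iff_tendsto_slope.1 hg).eventually (gt_mem_nhds hc)
  rw [eventually_nhdsWithin_iff] at h
  filter_upwards [h] with s hs
  have key : s ≠ 0 → g s = s * slope g 0 s := fun hs0 => by
    rw [slope_def_field, h0]; field_simp; ring
  refine ⟨fun hpos => ?_, fun hneg => ?_⟩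
  · rw [key hpos.ne']; exact mul_neg_of_pos_of_neg hpos (hs hpos.ne')
  · rw [key hneg.ne]; exact mul_pos_of_neg_of_neg hneg (hs hneg.ne)

/-- for a locally convex real analytic arc-length parametrized plane curve σ,
    near each σ(t₀) there is a real analytic solution ψ of the ZMC equation (a stream
    function of the virtual gas with ρc = 1) such that ψ(σ(t)) = t, B vanishes along σ with
    ∇B ≠ 0, and B < 0 (supersonic) on the side of σ''(t) while B > 0 (subsonic) on the
    opposite side. -/
theorem stmt19 (a b : ℝ) (σ : ℝ → ℝ × ℝ)
    (hanal : AnalyticOnNhd ℝ σ (Ioo a b))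
    (hunit : ∀ t ∈ Ioo a b, (deriv σ t).1 ^ 2 + (deriv σ t).2 ^ 2 = 1)
    (hconv : ∀ t ∈ Ioo a b, deriv (deriv σ) t ≠ 0) :
    ∀ t₀ ∈ Ioo a b, ∃ V : Set (ℝ × ℝ), ∃ δ > 0, ∃ ψ : ℝ × ℝ → ℝ,
      IsOpen V ∧ σ t₀ ∈ V ∧ AnalyticOnNhd ℝ ψ V ∧
      (∀ q ∈ V, ZMCAt ψ q) ∧
      ∀ t : ℝ, |t - t₀| < δ →
        t ∈ Ioo a b ∧ σ t ∈ V ∧ ψ (σ t) = t ∧ Bfun ψ (σ t) = 0 ∧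
        (pd1 (Bfun ψ) (σ t), pd2 (Bfun ψ) (σ t)) ≠ (0, 0) ∧
        ∃ s₀ > 0, ∀ s : ℝ, 0 < s → s < s₀ →
          σ t + s • deriv (deriv σ) t ∈ V ∧
          Bfun ψ (σ t + s • deriv (deriv σ) t) < 0 ∧
          σ t - s • deriv (deriv σ) t ∈ V ∧
          0 < Bfun ψ (σ t - s • deriv (deriv σ) t) := by
  intro t₀ ht₀
  have hI : ∀ t ∈ Ioo a b, ∀ᶠ x in 𝓝 t, x ∈ Ioo a b := fun t ht => isOpen_Ioo.mem_nhds ht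
  have hU : ∀ t ∈ Ioo a b, ∀ᶠ x in 𝓝 t, (deriv σ x).1 ^ 2 + (deriv σ x).2 ^ 2 = 1 :=
    fun t ht => (hI t ht).mono hunit
  have hN : ∀ t ∈ Ioo a b, ∀ᶠ x in 𝓝 t, deriv (deriv σ) x ≠ 0 :=
    fun t ht => (hI t ht).mono hconv
  have hσ := hanal t₀ ht₀
  obtain ⟨ψ, hψ, hmid, hfill⟩ := exists_stream hσ (det_ne_zero_of_frame (hunit t₀ ht₀)
    (inner_deriv_eq_zero hσ (hU t₀ ht₀)) (hconv t₀ ht₀))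
  have hst : StreamAt σ ψ (t₀, t₀) := ⟨hσ, hσ, by rwa [mid_self], hmid⟩
  obtain ⟨ρ, hρ, hV⟩ := Metric.eventually_nhds_iff_ball.1 hψ.eventually_analyticAt
  have hVn : Metric.ball (σ t₀) ρ ∈ 𝓝 (σ t₀) := Metric.ball_mem_nhds _ hρ
  have hdiag : ContinuousAt (fun x : ℝ => (x, x)) t₀ := by fun_prop
  obtain ⟨δ, hδ, hgood⟩ := Metric.eventually_nhds_iff.1
    ((hI t₀ ht₀).and ((hσ.continuousAt.eventually hVn).and (hdiag.eventually hst.eventually)))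
  refine ⟨Metric.ball (σ t₀) ρ, δ, hδ, ψ, Metric.isOpen_ball, Metric.mem_ball_self hρ, hV, ?_, ?_⟩
  · -- The equation holds on an open set of midpoints, hence everywhere by analytic continuation.
    have hfst : ∀ᶠ p in 𝓝 ((t₀, t₀) : ℝ × ℝ), p.1 ∈ Ioo a b :=
      continuousAt_fst.eventually (hI t₀ ht₀)
    have hsnd : ∀ᶠ p in 𝓝 ((t₀, t₀) : ℝ × ℝ), p.2 ∈ Ioo a b :=
      continuousAt_snd.eventually (hI t₀ ht₀)
    have hne := eventually_ne_of_hasStrictDerivAt hσ.deriv.hasStrictDerivAt (hconv t₀ ht₀)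
    obtain ⟨q₀, hq₀, hev⟩ := hfill _ (hst.eventually.and (hfst.and (hsnd.and hne))) _ hVn
    let Z : ℝ × ℝ → ℝ := fun q => (1 - (pd2 ψ q) ^ 2) * pd1 (pd1 ψ) q
      + 2 * pd1 ψ q * pd2 ψ q * pd2 (pd1 ψ) q + (1 - (pd1 ψ q) ^ 2) * pd2 (pd2 ψ) q
    suffices hZ : EqOn Z 0 (Metric.ball (σ t₀) ρ) from fun q hq => hZ hq
    refine AnalyticOnNhd.eqOn_zero_of_preconnected_of_eventuallyEq_zero (𝕜 := ℝ) (z₀ := q₀) ?_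
      (convex_ball (σ t₀) ρ).isPreconnected hq₀ ?_
    · intro q hq
      have h1 := analyticAt_pd1 (hV q hq)
      have h2 := analyticAt_pd2 (hV q hq)
      exact (((analyticAt_const.sub (h2.pow 2)).mul (analyticAt_pd1 h1)).add
        (((analyticAt_const.mul h1).mul h2).mul (analyticAt_pd2 h1))).add
        ((analyticAt_const.sub (h1.pow 2)).mul (analyticAt_pd2 h2))
    · filter_upwards [hev] with q ⟨p, ⟨hs, hp1, hp2, hp⟩, hpne, hq⟩
      rw [hq]
      exact StreamAt.zmc hs (hunit _ hp1) (hunit _ hp2) (hp hpne)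
  · intro t ht
    obtain ⟨htI, htV, hts⟩ := hgood (by rwa [Real.dist_eq])
    obtain ⟨hB0, hBd, hBneg⟩ := hts.bfun (hU t htI) (hN t htI)
    refine ⟨htI, htV, ?_, hB0, ?_, ?_⟩
    · simpa [mid_self] using hts.mid_eq.self_of_nhds
    · intro h
      rw [clm_apply_eq] at hBneg
      rw [Prod.mk.injEq] at h
      change _ • pd1 (Bfun ψ) (σ t) + _ • pd2 (Bfun ψ) (σ t) < 0 at hBneg
      rw [h.1, h.2] at hBneg
      simp at hBneg
    · have hline : HasDerivAt (fun s : ℝ => σ t + s • deriv (deriv σ) t) (deriv (deriv σ) t) 0 := by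
        simpa using ((hasDerivAt_id (0 : ℝ)).smul_const (deriv (deriv σ) t)).const_add (σ t)
      have hg : HasDerivAt (fun s : ℝ => Bfun ψ (σ t + s • deriv (deriv σ) t))
          (fderiv ℝ (Bfun ψ) (σ t) (deriv (deriv σ) t)) 0 := by
        have hBd' : HasFDerivAt (Bfun ψ) (fderiv ℝ (Bfun ψ) (σ t))
            (σ t + (0 : ℝ) • deriv (deriv σ) t) := by
          rw [zero_smul, add_zero]; exact hBd.hasFDerivAt
        exact hBd'.comp_hasDerivAt (0 : ℝ) hline
      have hsign := sign_of_deriv_neg hg (by simpa using hB0) hBneg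
      have hmem : ∀ᶠ s in 𝓝 (0 : ℝ), σ t + s • deriv (deriv σ) t ∈ Metric.ball (σ t₀) ρ :=
        hline.continuousAt.eventually (Metric.isOpen_ball.mem_nhds (by simpa using htV))
      obtain ⟨s₀, hs₀, hs⟩ := Metric.eventually_nhds_iff.1 (hmem.and hsign)
      refine ⟨s₀, hs₀, fun s hpos hlt => ?_⟩
      have hp := hs (y := s) (by rwa [Real.dist_eq, sub_zero, abs_of_pos hpos])
      have hm := hs (y := -s) (by rwa [Real.dist_eq, sub_zero, abs_neg, abs_of_pos hpos])
      rw [neg_smul, ← sub_eq_add_neg] at hm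
      exact ⟨hp.1, hp.2.1 hpos, hm.1, hm.2.2 (neg_neg_of_pos hpos)⟩
end
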